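/- arXiv:1111.4457 — 6 statements merged into one kernel-verified Lean document; each statement's English description precedes it below -/
import Mathlib

section
/- Assume the SOSC holds with respect to J, and suppose c_F ∈ (0,1] and C_F ≥ 1 satisfy c_F r^D ≤ H^D(F ∩ B(x,r)) ≤ C_F r^D for all x ∈ F and 0 < r ≤ diam F. Set ε₀ := H^D(F)^{1/D} and c := max{4 c_F^{−1/D}, diam(J) · H^D(F)^{−1/D}} − C_F^{−1/D}. If lim_{δ→0⁺} (1/ln(1/δ)) ∫_δ^{ε₀} ε^{D−d+1} H^{d−1}(∂F(ε)) ε^{−1} dε = 0, then for Lebesgue-almost every ε ∈ (0,ε₀): H^{d−1}({z ∈ ∂F(ε) : d(z, ℝ^d ∖ J) > cε}) = 0; that is, for almost every ε the surface measure of the parallel set is concentrated in the closed cε-neighborhood of the closure of the complement of J. -/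
open MeasureTheory Metric Filter Set
open scoped ENNReal Topology

/-- open covers nearly realising the Hausdorff premeasure -/
lemma exists_open_cover {X : Type*} [MetricSpace X] [MeasurableSpace X] [BorelSpace X]
    {s : ℝ} (hs : 0 ≤ s) (A : Set X) {α β : ℝ≥0∞} (hA : μH[s] A ≤ α) (hα : α < β)
    {η : ℝ≥0∞} (hη : 0 < η) :
    ∃ u : ℕ → Set X, (∀ i, IsOpen (u i)) ∧ A ⊆ ⋃ i, u i ∧ (∀ i, ediam (u i) ≤ η) ∧
      ∑' i, (⨆ _ : (u i).Nonempty, ediam (u i) ^ s) < β := by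
  obtain ⟨η', hη'0, hη'⟩ := exists_between hη
  rw [Measure.hausdorffMeasure_apply] at hA
  have h1 := (le_iSup₂ (f := fun (r : ℝ≥0∞) (_ : 0 < r) =>
        ⨅ (t : ℕ → Set X) (_ : A ⊆ ⋃ n, t n) (_ : ∀ n, ediam (t n) ≤ r),
          ∑' n, ⨆ _ : (t n).Nonempty, ediam (t n) ^ s) η' hη'0).trans hA
  have h2 := lt_of_le_of_lt h1 hα
  simp only [iInf_lt_iff] at h2
  obtain ⟨t, ht, htd, hsum⟩ := h2
  obtain ⟨γ, hγ, hγs⟩ := ENNReal.exists_pos_sum_of_countable'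
    (tsub_pos_of_lt hsum).ne' ℕ
  have key : ∀ i, ∃ e : NNReal, 0 < e ∧ ediam (t i) + 2 * e ≤ η ∧
      (ediam (t i) + 2 * e) ^ s ≤ ediam (t i) ^ s + γ i := by
    intro i
    have hfin : ediam (t i) ≠ ⊤ := ((htd i).trans_lt (hη'.trans_le le_top)).ne
    have hc : Tendsto (fun e : NNReal => ediam (t i) + 2 * (e : ℝ≥0∞)) (𝓝[>] 0)
        (𝓝 (ediam (t i))) := by
      have : Continuous (fun e : NNReal => ediam (t i) + 2 * (e : ℝ≥0∞)) := by
        refine continuous_const.add ?_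
        exact (ENNReal.continuous_const_mul (by simp)).comp ENNReal.continuous_coe
      have h := (this.tendsto 0).mono_left (nhdsWithin_le_nhds (s := Ioi 0))
      simpa using h
    have hc2 : Tendsto (fun e : NNReal => (ediam (t i) + 2 * (e : ℝ≥0∞)) ^ s) (𝓝[>] 0)
        (𝓝 (ediam (t i) ^ s)) :=
      (ENNReal.continuous_rpow_const.tendsto _).comp hc
    have e1 : ∀ᶠ e : NNReal in 𝓝[>] 0, ediam (t i) + 2 * (e : ℝ≥0∞) < η :=
      hc.eventually_lt_const ((htd i).trans_lt hη')
    have e2 : ∀ᶠ e : NNReal in 𝓝[>] 0,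
        (ediam (t i) + 2 * (e : ℝ≥0∞)) ^ s < ediam (t i) ^ s + γ i :=
      hc2.eventually_lt_const (ENNReal.lt_add_right
        (ENNReal.rpow_ne_top_of_nonneg hs hfin) (hγ i).ne')
    obtain ⟨e, h1, h2, h3⟩ := (e1.and (e2.and self_mem_nhdsWithin)).exists
    exact ⟨e, h3, h1.le, h2.le⟩
  choose e he0 he1 he2 using key
  refine ⟨fun i => thickening (e i) (t i), fun i => isOpen_thickening,
    ht.trans (iUnion_mono fun i => self_subset_thickening (by exact_mod_cast he0 i) _),
    fun i => (ediam_thickening_le _).trans (he1 i), ?_⟩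
  calc ∑' i, (⨆ _ : (thickening (e i) (t i)).Nonempty, ediam (thickening (e i) (t i)) ^ s)
      ≤ ∑' i, ((⨆ _ : (t i).Nonempty, ediam (t i) ^ s) + γ i) := by
        refine ENNReal.tsum_le_tsum fun i => iSup_le fun hne => ?_
        have hne' : (t i).Nonempty := by
          by_contra h
          rw [not_nonempty_iff_eq_empty] at h
          simp [h] at hne
        simp only [hne', iSup_pos]
        exact (ENNReal.rpow_le_rpow (ediam_thickening_le _) hs).trans (he2 i)
    _ = (∑' i, (⨆ _ : (t i).Nonempty, ediam (t i) ^ s)) + ∑' i, γ i := ENNReal.tsum_add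
    _ < β := by
        rw [add_comm]
        exact lt_tsub_iff_right.mp hγs

lemma measurable_slice_compact {X : Type*} [MetricSpace X] [MeasurableSpace X] [BorelSpace X]
    {s : ℝ} (hs : 0 ≤ s) {C : Set X} (hC : IsCompact C) {φ : X → ℝ} (hφ : Continuous φ) :
    Measurable fun t : ℝ => μH[s] (C ∩ φ ⁻¹' {t}) := by
  refine measurable_of_Iic fun α => ?_
  rcases eq_or_ne α ⊤ with rfl | hα
  · simp
  let O : ℕ → Set ℝ := fun n => {t | ∃ u : ℕ → Set X, (∀ i, IsOpen (u i)) ∧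
    (C ∩ φ ⁻¹' {t}) ⊆ ⋃ i, u i ∧ (∀ i, ediam (u i) ≤ ((n : ℝ≥0∞) + 1)⁻¹) ∧
      ∑' i, (⨆ _ : (u i).Nonempty, ediam (u i) ^ s) < α + ((n : ℝ≥0∞) + 1)⁻¹}
  have hpos : ∀ n : ℕ, (0 : ℝ≥0∞) < ((n : ℝ≥0∞) + 1)⁻¹ := fun n => by
    simp [ENNReal.inv_pos]
  have htend : Tendsto (fun n : ℕ => ((n : ℝ≥0∞) + 1)⁻¹) atTop (𝓝 0) := by
    have := (tendsto_add_atTop_iff_nat 1).2 ENNReal.tendsto_inv_nat_nhds_zero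
    simpa using this
  have hO : ∀ n, IsOpen (O n) := by
    intro n
    rw [isOpen_iff_mem_nhds]
    rintro t ⟨u, hu, hcov, hd, hsum⟩
    have hK : IsCompact (φ '' (C \ ⋃ i, u i)) :=
      (hC.diff (isOpen_iUnion hu)).image hφ
    have ht : t ∈ (φ '' (C \ ⋃ i, u i))ᶜ := by
      rintro ⟨x, ⟨hx, hxu⟩, hxt⟩
      exact hxu (hcov ⟨hx, hxt⟩)
    filter_upwards [hK.isClosed.isOpen_compl.mem_nhds ht] with t' ht'
    refine ⟨u, hu, ?_, hd, hsum⟩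
    rintro x ⟨hx, hxt⟩
    by_contra hxu
    exact ht' ⟨x, ⟨hx, hxu⟩, hxt⟩
  have heq : (fun t : ℝ => μH[s] (C ∩ φ ⁻¹' {t})) ⁻¹' Iic α = ⋂ n, O n := by
    ext t
    simp only [mem_preimage, mem_Iic, mem_iInter]
    constructor
    · intro h n
      exact exists_open_cover hs _ h (ENNReal.lt_add_right hα (hpos n).ne') (hpos n)
    · intro h
      choose u hu hcov hd hsum using h
      rw [Measure.hausdorffMeasure_apply]
      refine iSup₂_le fun r hr => ?_
      have hlim : Tendsto (fun n : ℕ => α + ((n : ℝ≥0∞) + 1)⁻¹) atTop (𝓝 α) := by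
        simpa using (tendsto_const_nhds (x := α)).add htend
      refine ge_of_tendsto hlim ?_
      filter_upwards [htend.eventually_lt_const hr] with n hn
      refine le_trans (iInf_le_of_le (u n) (iInf_le_of_le (hcov n) (iInf_le_of_le
        (fun i => (hd n i).trans hn.le) le_rfl))) (hsum n).le
  rw [heq]
  exact MeasurableSet.iInter fun n => (hO n).measurableSet

lemma measurable_slice_open {X : Type*} [MetricSpace X] [ProperSpace X] [MeasurableSpace X]
    [BorelSpace X]
    {s : ℝ} (hs : 0 ≤ s) {U : Set X} (hU : IsOpen U) {φ : X → ℝ} (hφ : Continuous φ) :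
    Measurable fun t : ℝ => μH[s] (U ∩ φ ⁻¹' {t}) := by
  rcases isEmpty_or_nonempty X with hX | ⟨⟨x0⟩⟩
  · have : ∀ A : Set X, A = ∅ := fun A => eq_empty_of_isEmpty A
    simp [this]
  obtain ⟨C, hC, -, hCU, hmono⟩ := hU.exists_iUnion_isClosed
  have hK : ∀ n : ℕ, IsCompact (closedBall x0 n ∩ C n) := fun n =>
    (isCompact_closedBall x0 _).inter_right (hC n)
  have hU2 : U = ⋃ n : ℕ, (closedBall x0 n ∩ C n) := by
    ext x
    constructor
    · intro hx
      rw [← hCU] at hx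
      obtain ⟨n, hn⟩ := mem_iUnion.1 hx
      obtain ⟨m, hm⟩ := exists_nat_ge (dist x x0)
      refine mem_iUnion.2 ⟨max n m, ?_, hmono (le_max_left _ _) hn⟩
      rw [mem_closedBall]
      refine hm.trans ?_
      exact_mod_cast le_max_right _ _
    · intro hx
      obtain ⟨n, hn⟩ := mem_iUnion.1 hx
      rw [← hCU]
      exact mem_iUnion.2 ⟨n, hn.2⟩
  have hm2 : ∀ t, Monotone fun n : ℕ => (closedBall x0 (n:ℝ) ∩ C n) ∩ φ ⁻¹' {t} := by
    intro t m n hmn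
    refine inter_subset_inter_left _ (inter_subset_inter ?_ (hmono hmn))
    exact closedBall_subset_closedBall (by exact_mod_cast hmn)
  have : (fun t : ℝ => μH[s] (U ∩ φ ⁻¹' {t})) =
      fun t => ⨆ n : ℕ, μH[s] ((closedBall x0 (n:ℝ) ∩ C n) ∩ φ ⁻¹' {t}) := by
    funext t
    rw [hU2, iUnion_inter, (hm2 t).measure_iUnion]
  rw [this]
  exact Measurable.iSup fun n => measurable_slice_compact hs (hK n) hφ

/-- Eilenberg's inequality -/
lemma eilenberg {X : Type*} [MetricSpace X] [MeasurableSpace X] [BorelSpace X]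
    {s : ℝ} (hs : 0 ≤ s) (A : Set X) (hA : μH[s + 1] A ≠ ⊤) {φ : X → ℝ}
    (hφ : LipschitzWith 1 φ) :
    ∫⁻ t, μH[s] (A ∩ φ ⁻¹' {t}) < ⊤ := by
  have hpos : ∀ n : ℕ, (0 : ℝ≥0∞) < ((n : ℝ≥0∞) + 1)⁻¹ := fun n => by
    simp [ENNReal.inv_pos]
  have htend : Tendsto (fun n : ℕ => ((n : ℝ≥0∞) + 1)⁻¹) atTop (𝓝 0) := by
    have := (tendsto_add_atTop_iff_nat 1).2 ENNReal.tendsto_inv_nat_nhds_zero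
    simpa using this
  have hex : ∀ n : ℕ, _ := fun n => exists_open_cover (s := s + 1) (by linarith) A le_rfl
    (ENNReal.lt_add_right hA one_ne_zero) (hpos n)
  choose u hu hcov hd hsum using hex
  let k : ℕ → ℕ → ℝ → ℝ≥0∞ := fun n i =>
    (closure (φ '' u n i)).indicator fun _ => ediam (u n i) ^ s
  have hkm : ∀ n i, Measurable (k n i) := fun n i =>
    measurable_const.indicator isClosed_closure.measurableSet
  have h1 : ∀ t, μH[s] (A ∩ φ ⁻¹' {t}) ≤ liminf (fun n => ∑' i, k n i t) atTop := by
    intro t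
    let ι : ℕ → Type := fun n => {i : ℕ // t ∈ closure (φ '' u n i)}
    have := Measure.hausdorffMeasure_le_liminf_tsum (ι := ι) s (A ∩ φ ⁻¹' {t}) (l := atTop)
      _ htend (fun n i => u n i.1) (Eventually.of_forall fun n i => hd n i.1)
      (Eventually.of_forall fun n => by
        rintro x ⟨hx, hxt⟩
        obtain ⟨i, hi⟩ := mem_iUnion.1 (hcov n hx)
        exact mem_iUnion.2 ⟨⟨i, subset_closure ⟨x, hi, hxt⟩⟩, hi⟩)
    refine this.trans (le_of_eq ?_)
    congr 1
    funext n
    refine (tsum_subtype {i : ℕ | t ∈ closure (φ '' u n i)}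
      (fun i => ediam (u n i) ^ s)).trans ?_
    refine tsum_congr fun i => ?_
    by_cases h : t ∈ closure (φ '' u n i) <;> simp [k, h]
  have h2 : ∀ n, ∫⁻ t, ∑' i, k n i t ≤ μH[s + 1] A + 1 := by
    intro n
    rw [lintegral_tsum fun i => (hkm n i).aemeasurable]
    refine le_trans (ENNReal.tsum_le_tsum fun i => ?_) (hsum n).le
    rw [lintegral_indicator_const isClosed_closure.measurableSet]
    rcases (u n i).eq_empty_or_nonempty with h | h
    · simp [h]
    · simp only [h, iSup_pos]
      have hv : volume (closure (φ '' u n i)) ≤ ediam (u n i) := by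
        refine (Real.volume_le_diam _).trans ?_
        rw [ediam_closure]
        simpa using hφ.ediam_image_le (u n i)
      rw [ENNReal.rpow_add_of_nonneg _ _ hs zero_le_one, ENNReal.rpow_one]
      gcongr
  calc ∫⁻ t, μH[s] (A ∩ φ ⁻¹' {t}) ≤ ∫⁻ t, liminf (fun n => ∑' i, k n i t) atTop :=
        lintegral_mono h1
    _ ≤ liminf (fun n => ∫⁻ t, ∑' i, k n i t) atTop :=
        lintegral_liminf_le fun n => Measurable.tsum (hkm n)
    _ ≤ μH[s + 1] A + 1 := by
        refine (liminf_le_liminf (Eventually.of_forall h2)).trans ?_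
        simp
    _ < ⊤ := by simp [hA.lt_top]

/-- local maximum values are countable -/
lemma countable_levels {X : Type*} [TopologicalSpace X] [SecondCountableTopology X]
    (φ : X → ℝ) : {t : ℝ | ∃ z, φ z = t ∧ IsLocalMax φ z}.Countable := by
  have hB := TopologicalSpace.isBasis_countableBasis X
  refine ((TopologicalSpace.countable_countableBasis X).image
    (fun b => sSup (φ '' b))).mono ?_
  rintro t ⟨z, rfl, hz⟩
  obtain ⟨b, hb, hzb, hsub⟩ := hB.mem_nhds_iff.1 hz
  refine ⟨b, hb, ?_⟩
  refine IsGreatest.csSup_eq ⟨mem_image_of_mem _ hzb, ?_⟩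
  rintro _ ⟨y, hy, rfl⟩
  exact hsub hy

lemma sim_surj {d : ℕ} {S : EuclideanSpace ℝ (Fin d) → EuclideanSpace ℝ (Fin d)} {r : ℝ}
    (hr : 0 < r) (hS : ∀ x y, dist (S x) (S y) = r * dist x y) : Function.Surjective S := by
  have hiso : Isometry (fun x => r⁻¹ • S x) := by
    refine Isometry.of_dist_eq fun x y => ?_
    rw [dist_smul₀, hS, Real.norm_of_nonneg (by positivity)]
    field_simp
  let A := hiso.affineIsometryOfStrictConvexSpace
  have hA : Function.Surjective A := by
    have := (A.toAffineIsometryEquiv rfl).surjective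
    rwa [AffineIsometry.coe_toAffineIsometryEquiv] at this
  intro y
  obtain ⟨x, hx⟩ := hA (r⁻¹ • y)
  refine ⟨x, ?_⟩
  have hx' : r⁻¹ • S x = r⁻¹ • y := hx
  exact (smul_right_injective _ (inv_ne_zero hr.ne')) hx'

lemma sim_open {d : ℕ} {S : EuclideanSpace ℝ (Fin d) → EuclideanSpace ℝ (Fin d)} {r : ℝ}
    (hr : 0 < r) (hS : ∀ x y, dist (S x) (S y) = r * dist x y)
    {O : Set (EuclideanSpace ℝ (Fin d))} (hO : IsOpen O) : IsOpen (S '' O) := by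
  rw [Metric.isOpen_iff] at hO ⊢
  rintro _ ⟨x, hx, rfl⟩
  obtain ⟨e, he, hsub⟩ := hO x hx
  refine ⟨r * e, by positivity, fun y hy => ?_⟩
  obtain ⟨x', rfl⟩ := sim_surj hr hS y
  refine ⟨x', hsub ?_, rfl⟩
  rw [mem_ball, hS] at hy
  exact lt_of_mul_lt_mul_left hy hr.le

lemma attractor_subset {X : Type*} [MetricSpace X] {N : ℕ} {S : Fin N → X → X} {r : Fin N → ℝ}
    (hr : ∀ i, r i ∈ Ioo (0 : ℝ) 1)
    (hS : ∀ i x y, dist (S i x) (S i y) = r i * dist x y) {F J : Set X}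
    (hF_ne : F.Nonempty) (hF_cpt : IsCompact F) (hF_self : F = ⋃ i, S i '' F)
    (hJ : IsClosed J) (hJne : J.Nonempty) (hJ_sub : ∀ i, S i '' J ⊆ J) : F ⊆ J := by
  obtain ⟨x0, hx0, hmax⟩ := hF_cpt.exists_isMaxOn hF_ne
    (continuous_infDist_pt J).continuousOn
  have h0 := hx0
  rw [hF_self] at h0
  obtain ⟨i, x, hx, hxx⟩ := mem_iUnion.1 h0
  have hle : infDist x0 J ≤ r i * infDist x J := by
    rw [← div_le_iff₀' (hr i).1]
    refine (le_infDist hJne).2 fun y hy => ?_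
    rw [div_le_iff₀' (hr i).1, ← hS, hxx]
    exact infDist_le_dist_of_mem (hJ_sub i ⟨y, hy, rfl⟩)
  have hle2 : infDist x J ≤ infDist x0 J := hmax hx
  have hz : infDist x0 J ≤ 0 := by
    have := (hr i).1; have := (hr i).2
    nlinarith [infDist_nonneg (x := x) (s := J)]
  intro y hy
  rw [hJ.mem_iff_infDist_zero hJne]
  exact le_antisymm ((show infDist y J ≤ infDist x0 J from hmax hy).trans hz) infDist_nonneg

lemma slice_ineq {d N : ℕ}
    {S : Fin N → EuclideanSpace ℝ (Fin d) → EuclideanSpace ℝ (Fin d)}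
    {r : Fin N → ℝ} (hr : ∀ i, r i ∈ Set.Ioo (0 : ℝ) 1)
    (hS : ∀ i x y, dist (S i x) (S i y) = r i * dist x y)
    {F : Set (EuclideanSpace ℝ (Fin d))}
    (hF_ne : F.Nonempty) (hF_cpt : IsCompact F)
    (hF_self : F = ⋃ i, S i '' F)
    {J : Set (EuclideanSpace ℝ (Fin d))} (hJ_cpt : IsCompact J)
    (hJ_reg : J = closure (interior J))
    (hJ_sub : ∀ i, S i '' J ⊆ J)
    (hJ_disj : ∀ i j, i ≠ j → Disjoint (S i '' interior J) (S j '' interior J))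
    (hJne : J.Nonempty) (hJc : (interior J)ᶜ.Nonempty) {s : ℝ} (hs : 0 ≤ s)
    (ε : ℝ) :
    ∑ i, ENNReal.ofReal (r i ^ s) *
      μH[s] ({z | infDist z F < infDist z (interior J)ᶜ} ∩ (fun z => infDist z F) ⁻¹' {ε / r i})
    ≤ μH[s] ({z | infDist z F < infDist z (interior J)ᶜ} ∩ (fun z => infDist z F) ⁻¹' {ε}) := by
  set V : ℝ → Set (EuclideanSpace ℝ (Fin d)) := fun ε =>
    {z | infDist z F < infDist z (interior J)ᶜ} ∩ (fun z => infDist z F) ⁻¹' {ε} with hV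
  have hFJ := attractor_subset hr hS hF_ne hF_cpt hF_self hJ_cpt.isClosed hJne hJ_sub
  have hopen : ∀ i, IsOpen (S i '' interior J) := fun i => sim_open (hr i).1 (hS i) isOpen_interior
  have hint : ∀ i, S i '' interior J ⊆ interior J := fun i =>
    interior_maximal ((image_mono interior_subset).trans (hJ_sub i)) (hopen i)
  have hcont : ∀ i, Continuous (S i) := fun i =>
    (LipschitzWith.of_dist_le_mul (K := ⟨r i, (hr i).1.le⟩) fun x y => (hS i x y).le).continuous
  have hmap : ∀ i, S i '' V (ε / r i) ⊆ V ε ∩ S i '' interior J := by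
    rintro i _ ⟨z, ⟨hz1, hz2⟩, rfl⟩
    have hr0 := (hr i).1
    simp only [mem_ofPred_eq, mem_preimage, mem_singleton_iff] at hz1 hz2
    have hzJ : ∀ x, dist z x ≤ infDist z F → x ∈ interior J := by
      intro x hx
      by_contra h
      exact absurd (infDist_le_dist_of_mem (x := z) (show x ∈ (interior J)ᶜ from h))
        (not_le.2 (hx.trans_lt hz1))
    have hd : infDist (S i z) F = r i * infDist z F := by
      apply le_antisymm
      · rw [← div_le_iff₀' hr0]
        refine (le_infDist hF_ne).2 fun y hy => ?_
        rw [div_le_iff₀' hr0, ← hS]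
        refine infDist_le_dist_of_mem ?_
        rw [hF_self]
        exact mem_iUnion.2 ⟨i, y, hy, rfl⟩
      · refine (le_infDist hF_ne).2 fun y hy => ?_
        by_contra! hlt
        obtain ⟨x, rfl⟩ := sim_surj hr0 (hS i) y
        rw [hS] at hlt
        have hlt' := lt_of_mul_lt_mul_left hlt hr0.le
        have hxJ := hzJ x hlt'.le
        rw [hF_self] at hy
        obtain ⟨j, x', hx', hxx⟩ := mem_iUnion.1 hy
        have hij : i = j := by
          by_contra hij
          have hcl : S j x' ∈ closure (S j '' interior J) := by
            apply image_closure_subset_closure_image (hcont j)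
            rw [← hJ_reg]
            exact ⟨x', hFJ hx', rfl⟩
          rw [hxx] at hcl
          exact ((hJ_disj i j hij).closure_right (hopen i)).le_bot ⟨⟨x, hxJ, rfl⟩, hcl⟩
        subst hij
        have : x' = x := by
          have h := hS i x' x
          rw [hxx, dist_self] at h
          have := (mul_eq_zero.1 h.symm).resolve_left hr0.ne'
          exact dist_eq_zero.1 this
        subst this
        exact absurd (infDist_le_dist_of_mem hx') (not_le.2 hlt')
    refine ⟨⟨?_, ?_⟩, z, hzJ z (by simpa using infDist_nonneg), rfl⟩
    · simp only [mem_ofPred_eq]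
      rw [hd]
      refine (mul_lt_mul_of_pos_left hz1 hr0).trans_le ?_
      refine (le_infDist hJc).2 fun y hy => ?_
      obtain ⟨x, rfl⟩ := sim_surj hr0 (hS i) y
      rw [hS]
      refine mul_le_mul_of_nonneg_left (infDist_le_dist_of_mem ?_) hr0.le
      intro hx
      exact hy (hint i ⟨x, hx, rfl⟩)
    · simp only [mem_preimage, mem_singleton_iff]
      rw [hd, hz2]
      field_simp
  calc ∑ i, ENNReal.ofReal (r i ^ s) * μH[s] (V (ε / r i))
      ≤ ∑ i, μH[s] (V ε ∩ S i '' interior J) := by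
        refine Finset.sum_le_sum fun i _ => ?_
        have hr0 := (hr i).1
        refine le_trans ?_ (measure_mono (hmap i))
        have hanti : AntilipschitzWith (⟨r i, hr0.le⟩ : NNReal)⁻¹ (S i) := by
          refine AntilipschitzWith.of_le_mul_dist fun x y => ?_
          rw [hS]
          refine le_of_eq ?_
          change _ = (r i)⁻¹ * _
          field_simp
        have h := hanti.le_hausdorffMeasure_image hs (V (ε / r i))
        have hK : (((⟨r i, hr0.le⟩ : NNReal)⁻¹ : NNReal) : ℝ≥0∞) ^ s
            = ENNReal.ofReal ((r i ^ s)⁻¹) := by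
          have : (((⟨r i, hr0.le⟩ : NNReal)⁻¹ : NNReal) : ℝ≥0∞) = ENNReal.ofReal (r i)⁻¹ := by
            rw [ENNReal.ofReal, Real.toNNReal_inv]
            congr 2
            exact (Real.toNNReal_of_nonneg hr0.le).symm
          rw [this, ENNReal.ofReal_rpow_of_pos (by positivity), Real.inv_rpow hr0.le]
        rw [hK] at h
        refine (mul_le_mul_right h _).trans (le_of_eq ?_)
        rw [← mul_assoc, ← ENNReal.ofReal_mul (by positivity), mul_inv_cancel₀ (by positivity)]
        simp
    _ = μH[s] (⋃ i, V ε ∩ S i '' interior J) := by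
        have hVm : MeasurableSet (V ε) := by
          refine (isOpen_lt ?_ ?_).measurableSet.inter
            ((measurableSet_singleton _).preimage (continuous_infDist_pt F).measurable)
          · exact continuous_infDist_pt F
          · exact continuous_infDist_pt _
        rw [measure_iUnion (fun i j hij => ((hJ_disj i j hij).mono inter_subset_right
          inter_subset_right)) (fun i => hVm.inter (hopen i).measurableSet), tsum_fintype]
    _ ≤ μH[s] (V ε) := measure_mono (iUnion_subset fun i => inter_subset_left)

lemma scale_lintegral (k : ℝ → ℝ≥0∞) {r : ℝ} (hr : 0 < r) (δ a : ℝ) :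
    ∫⁻ ε in Ioc δ a, ENNReal.ofReal r⁻¹ * k (ε / r) = ∫⁻ ε in Ioc (δ / r) (a / r), k ε := by
  rw [lintegral_const_mul' _ _ (by simp), ← lintegral_indicator measurableSet_Ioc,
    ← lintegral_indicator measurableSet_Ioc]
  have h1 : (Ioc δ a).indicator (fun ε => k (ε / r)) =
      fun ε => (Ioc (δ / r) (a / r)).indicator k (r⁻¹ * ε) := by
    funext ε
    have : r⁻¹ * ε = ε / r := by field_simp
    rw [this]
    by_cases h : ε ∈ Ioc δ a
    · rw [indicator_of_mem h, indicator_of_mem]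
      exact ⟨(div_lt_div_iff_of_pos_right hr).2 h.1, (div_le_div_iff_of_pos_right hr).2 h.2⟩
    · rw [indicator_of_notMem h, indicator_of_notMem]
      intro h'
      exact h ⟨(div_lt_div_iff_of_pos_right hr).1 h'.1, (div_le_div_iff_of_pos_right hr).1 h'.2⟩
  have hinv : r⁻¹ ≠ 0 := by positivity
  have h2 := Real.smul_map_volume_mul_left hinv
  rw [h1]
  conv_rhs => rw [← h2]
  rw [lintegral_smul_measure, abs_of_pos (by positivity), smul_eq_mul]
  congr 1
  exact ((Homeomorph.mulLeft₀ _ hinv).measurableEmbedding.lintegral_map _).symm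

lemma step_ineq {N : ℕ} {r : Fin N → ℝ} (hr : ∀ i, r i ∈ Set.Ioo (0 : ℝ) 1) {D s : ℝ}
    (hD_dim : ∑ i, r i ^ D = 1) {h : ℝ → ℝ≥0∞}
    (hineq : ∀ ε, ∑ i, ENNReal.ofReal (r i ^ s) * h (ε / r i) ≤ h ε) (hm : Measurable h)
    {k : ℝ → ℝ≥0∞} (hk : ∀ ε, k ε = ENNReal.ofReal (ε ^ (D - s - 1)) * h ε)
    {a b q δ : ℝ} (hab : a ≤ b) (hb : ∀ i, b ≤ a / r i) (hq : 0 < q)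
    (hqr : ∀ i, q ≤ r i) (hδ : 0 < δ) (hδa : δ ≤ a) :
    (∫⁻ ε in Ioc a b, k ε) + ∫⁻ ε in Ioc (δ / q) b, k ε ≤ ∫⁻ ε in Ioc δ b, k ε := by
  have hkm : Measurable k := by
    rw [show k = fun ε => ENNReal.ofReal (ε ^ (D - s - 1)) * h ε from funext hk]
    fun_prop
  have hpt : ∀ ε, 0 < ε →
      ∑ i, ENNReal.ofReal (r i ^ D) * (ENNReal.ofReal (r i)⁻¹ * k (ε / r i)) ≤ k ε := by
    intro ε hε
    rw [hk ε]
    refine le_trans (le_of_eq ?_) (mul_le_mul_right (hineq ε) _)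
    rw [Finset.mul_sum]
    refine Finset.sum_congr rfl fun i _ => ?_
    have hr0 := (hr i).1
    rw [hk, ← mul_assoc, ← mul_assoc, ← mul_assoc, ← ENNReal.ofReal_mul (by positivity),
      ← ENNReal.ofReal_mul (by positivity), ← ENNReal.ofReal_mul (by positivity)]
    congr 2
    rw [Real.div_rpow hε.le hr0.le, show D = (D - s - 1) + s + 1 by ring,
      Real.rpow_add hr0, Real.rpow_add hr0, Real.rpow_one]
    have : (r i) ^ (D - s - 1) ≠ 0 := by positivity
    have e : D - s - 1 + s + 1 - s - 1 = D - s - 1 := by ring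
    rw [e]
    field_simp
  have hsplit : ∫⁻ ε in Ioc δ b, k ε = (∫⁻ ε in Ioc δ a, k ε) + ∫⁻ ε in Ioc a b, k ε := by
    rw [← Ioc_union_Ioc_eq_Ioc hδa hab, lintegral_union measurableSet_Ioc]
    exact Ioc_disjoint_Ioc_of_le le_rfl
  rw [hsplit, add_comm]
  gcongr ?_ + _
  calc ∫⁻ ε in Ioc (δ / q) b, k ε
      = ∑ i, ENNReal.ofReal (r i ^ D) * ∫⁻ ε in Ioc (δ / q) b, k ε := by
        rw [← Finset.sum_mul, ← ENNReal.ofReal_sum_of_nonneg, hD_dim]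
        · simp
        · intro i _
          have := (hr i).1
          positivity
    _ ≤ ∑ i, ENNReal.ofReal (r i ^ D) * ∫⁻ ε in Ioc (δ / r i) (a / r i), k ε := by
        refine Finset.sum_le_sum fun i _ => mul_le_mul_right (lintegral_mono_set ?_) _
        refine Ioc_subset_Ioc ?_ (hb i)
        exact div_le_div_of_nonneg_left hδ.le hq (hqr i)
    _ = ∑ i, ∫⁻ ε in Ioc δ a,
          ENNReal.ofReal (r i ^ D) * (ENNReal.ofReal (r i)⁻¹ * k (ε / r i)) := by
        refine Finset.sum_congr rfl fun i _ => ?_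
        rw [lintegral_const_mul' _ _ (by simp), scale_lintegral k (hr i).1]
    _ = ∫⁻ ε in Ioc δ a,
          ∑ i, ENNReal.ofReal (r i ^ D) * (ENNReal.ofReal (r i)⁻¹ * k (ε / r i)) := by
        rw [lintegral_finsetSum]
        intro i _
        fun_prop
    _ ≤ ∫⁻ ε in Ioc δ a, k ε :=
        setLIntegral_mono hkm fun ε hε => hpt ε (hδ.trans hε.1)

lemma no_lim {f : ℝ → ℝ} {c0 a q : ℝ} (hc0 : 0 < c0) (ha : 0 < a) (hq : 0 < q) (hq1 : q < 1)
    (hf : ∀ n : ℕ, n * c0 ≤ f (a * q ^ n))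
    (hlim : Tendsto (fun δ : ℝ => (Real.log δ⁻¹)⁻¹ * f δ) (𝓝[>] 0) (𝓝 0)) : False := by
  have hl : 0 < Real.log q⁻¹ := Real.log_pos ((one_lt_inv₀ hq).2 hq1)
  have hseq0 : Tendsto (fun n : ℕ => a * q ^ n) atTop (𝓝 0) := by
    simpa using (tendsto_pow_atTop_nhds_zero_of_lt_one hq.le hq1).const_mul a
  have hseq : Tendsto (fun n : ℕ => a * q ^ n) atTop (𝓝[>] 0) :=
    tendsto_nhdsWithin_iff.2 ⟨hseq0, Eventually.of_forall fun n => by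
      show 0 < a * q ^ n
      positivity⟩
  set κ := c0 / (2 * Real.log q⁻¹) with hκ
  have hκ0 : 0 < κ := by positivity
  have e1 := (hlim.comp hseq).eventually_lt_const hκ0
  have e2 := hseq0.eventually_lt_const one_pos
  obtain ⟨M, hM⟩ := exists_nat_gt (κ * Real.log a⁻¹ / (c0 / 2))
  obtain ⟨n, h1, h2, h3⟩ := (e1.and (e2.and (eventually_ge_atTop M))).exists
  simp only [Function.comp] at h1
  have hpos : 0 < a * q ^ n := by positivity
  have hlog : 0 < Real.log (a * q ^ n)⁻¹ := Real.log_pos ((one_lt_inv₀ hpos).2 h2)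
  rw [inv_mul_lt_iff₀ hlog] at h1
  have hlogeq : Real.log (a * q ^ n)⁻¹ = Real.log a⁻¹ + n * Real.log q⁻¹ := by
    rw [mul_inv, Real.log_mul (by positivity) (by positivity), ← inv_pow, Real.log_pow]
  rw [hlogeq] at h1
  have h4 : κ * Real.log q⁻¹ = c0 / 2 := by
    have := hl.ne'
    rw [hκ]
    generalize Real.log q⁻¹ = l at *
    field_simp
  rw [div_lt_iff₀ (by positivity)] at hM
  have h5 : (M : ℝ) ≤ n := by exact_mod_cast h3
  have h6 := hf n
  have h7 : (M : ℝ) * (c0 / 2) ≤ n * (c0 / 2) := by gcongr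
  nlinarith

lemma frontier_subset_level {X : Type*} [MetricSpace X] {F : Set X} (hF : F.Nonempty) {ε : ℝ}
    (hε : 0 ≤ ε) : cthickening ε F = {z | infDist z F ≤ ε} ∧
    frontier (cthickening ε F) ⊆ (fun z => infDist z F) ⁻¹' {ε} := by
  have h : cthickening ε F = {z | infDist z F ≤ ε} := by
    ext z
    simp only [mem_cthickening_iff, infDist, mem_ofPred_eq]
    rw [ENNReal.le_ofReal_iff_toReal_le (infEDist_ne_top hF) hε]
  refine ⟨h, ?_⟩
  rw [h]
  exact frontier_le_subset_eq (continuous_infDist_pt F) continuous_const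

lemma frontier_ae {X : Type*} [MetricSpace X] [SecondCountableTopology X] {F : Set X}
    (hF : F.Nonempty) : ∀ᵐ ε : ℝ, 0 < ε →
      frontier (cthickening ε F) = (fun z => infDist z F) ⁻¹' {ε} := by
  have hc := (countable_levels (fun z : X => infDist z F)).ae_notMem volume
  filter_upwards [hc] with ε hε h0
  obtain ⟨h1, h2⟩ := frontier_subset_level hF h0.le
  refine subset_antisymm h2 fun z hz => ?_
  rw [frontier, (isClosed_cthickening).closure_eq, h1]
  refine ⟨le_of_eq hz, fun hint => hε ⟨z, hz, ?_⟩⟩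
  filter_upwards [mem_interior_iff_mem_nhds.1 hint] with y hy
  exact hy.trans (le_of_eq (Eq.symm hz))

lemma level_lintegral_lt_top {d : ℕ} {F : Set (EuclideanSpace ℝ (Fin d))} (hF_ne : F.Nonempty)
    (hF_cpt : IsCompact F) (hd : 1 ≤ d) (D : ℝ) {δ ε₀ : ℝ} (hδ : 0 < δ) :
    ∫⁻ ε in Ioc δ ε₀, ENNReal.ofReal (ε ^ (D - d)) *
      μH[(d:ℝ) - 1] ((fun z => infDist z F) ⁻¹' {ε}) < ⊤ := by
  have hs : (0:ℝ) ≤ (d:ℝ) - 1 := by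
    have : (1:ℝ) ≤ d := by exact_mod_cast hd
    linarith
  have hA : μH[((d:ℝ) - 1) + 1] (cthickening ε₀ F) ≠ ⊤ := by
    have h := (isAddHaarMeasure_hausdorffMeasure (E := EuclideanSpace ℝ (Fin d))).lt_top_of_isCompact
      (hF_cpt.cthickening (r := ε₀))
    simpa using h.ne
  have hE := eilenberg hs _ hA (lipschitz_infDist_pt F)
  obtain ⟨M, hM⟩ := (isCompact_Icc (a := δ) (b := ε₀)).exists_bound_of_continuousOn
    (f := fun ε : ℝ => ε ^ (D - d)) (fun x hx =>
      (Real.continuousAt_rpow_const x _ (Or.inl (hδ.trans_le hx.1).ne')).continuousWithinAt)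
  calc ∫⁻ ε in Ioc δ ε₀, ENNReal.ofReal (ε ^ (D - d)) *
      μH[(d:ℝ) - 1] ((fun z => infDist z F) ⁻¹' {ε})
      ≤ ∫⁻ ε in Ioc δ ε₀, ENNReal.ofReal M *
        μH[(d:ℝ) - 1] (cthickening ε₀ F ∩ (fun z => infDist z F) ⁻¹' {ε}) := by
        refine setLIntegral_mono' measurableSet_Ioc fun ε hε => ?_
        gcongr
        · exact (le_abs_self _).trans (hM ε ⟨hε.1.le, hε.2⟩)
        · intro z hz
          refine ⟨?_, hz⟩
          rw [(frontier_subset_level hF_ne ((hδ.trans (hε.1)).le.trans hε.2)).1]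
          exact (le_of_eq hz).trans hε.2
    _ ≤ ∫⁻ ε, ENNReal.ofReal M *
        μH[(d:ℝ) - 1] (cthickening ε₀ F ∩ (fun z => infDist z F) ⁻¹' {ε}) :=
        setLIntegral_le_lintegral _ _
    _ < ⊤ := by
        rw [lintegral_const_mul' _ _ (by simp)]
        exact ENNReal.mul_lt_top (by simp) hE

lemma integral_eq_level {d : ℕ} {F : Set (EuclideanSpace ℝ (Fin d))} (hF_ne : F.Nonempty)
    (hF_cpt : IsCompact F) (hd : 1 ≤ d) (D : ℝ) {δ ε₀ : ℝ} (hδ : 0 < δ) :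
    ∫ ε in Set.Ioc δ ε₀,
          ε ^ (D - d + 1) * (μH[(d:ℝ) - 1] (frontier (Metric.cthickening ε F))).toReal
            * ε⁻¹ = (∫⁻ ε in Ioc δ ε₀, ENNReal.ofReal (ε ^ (D - d)) *
      μH[(d:ℝ) - 1] ((fun z => infDist z F) ⁻¹' {ε})).toReal := by
  have hs : (0:ℝ) ≤ (d:ℝ) - 1 := by
    have : (1:ℝ) ≤ d := by exact_mod_cast hd
    linarith
  have hGm : Measurable fun ε : ℝ => μH[(d:ℝ) - 1]
      ((fun z : EuclideanSpace ℝ (Fin d) => infDist z F) ⁻¹' {ε}) := by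
    simpa using measurable_slice_open hs isOpen_univ (continuous_infDist_pt F)
  have hm : Measurable fun ε : ℝ => ENNReal.ofReal (ε ^ (D - d)) *
      μH[(d:ℝ) - 1] ((fun z => infDist z F) ⁻¹' {ε}) := by fun_prop
  rw [← integral_toReal hm.aemeasurable
    (ae_lt_top hm (level_lintegral_lt_top hF_ne hF_cpt hd D hδ).ne)]
  refine setIntegral_congr_ae measurableSet_Ioc ?_
  filter_upwards [frontier_ae hF_ne] with ε hε hmem
  have h0 : 0 < ε := hδ.trans hmem.1
  rw [hε h0, ENNReal.toReal_mul, ENNReal.toReal_ofReal (by positivity), Real.rpow_add_one h0.ne']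
  field_simp

/-- (Concentration of surface measure near `∂J` in the degenerate
case.) Under the SOSC with respect to `J`, with Ahlfors regularity constants
`c_F ∈ (0,1]` and `C_F ≥ 1`, set `ε₀ := H^D(F)^{1/D}` and
`c := max(4 c_F^{-1/D}, diam(J) · H^D(F)^{-1/D}) − C_F^{-1/D}`.  If the
logarithmically averaged rescaled surface contents tend to `0`, then for
Lebesgue-almost every `ε ∈ (0,ε₀)` the part of `∂F(ε)` at distance `> cε` from
`ℝ^d ∖ J` is `H^{d-1}`-null. -/
theorem statement7 (d N : ℕ) (hd : 1 ≤ d) (hN : 2 ≤ N)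
    (S : Fin N → EuclideanSpace ℝ (Fin d) → EuclideanSpace ℝ (Fin d))
    (r : Fin N → ℝ) (hr : ∀ i, r i ∈ Set.Ioo (0 : ℝ) 1)
    (hS : ∀ i x y, dist (S i x) (S i y) = r i * dist x y)
    (F : Set (EuclideanSpace ℝ (Fin d)))
    (hF_ne : F.Nonempty) (hF_cpt : IsCompact F)
    (hF_self : F = ⋃ i, S i '' F)
    (D : ℝ) (hD : 0 < D) (hD_dim : ∑ i, r i ^ D = 1)
    (J : Set (EuclideanSpace ℝ (Fin d))) (hJ_cpt : IsCompact J)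
    (hJ_reg : J = closure (interior J))
    (hJ_sub : ∀ i, S i '' J ⊆ J)
    (hJ_disj : ∀ i j, i ≠ j → Disjoint (S i '' interior J) (S j '' interior J))
    (hSOSC : (F ∩ interior J).Nonempty)
    (c_F C_F : ℝ) (hc_F : c_F ∈ Set.Ioc (0 : ℝ) 1) (hC_F : 1 ≤ C_F)
    (hreg : ∀ x ∈ F, ∀ ρ : ℝ, 0 < ρ → ρ ≤ Metric.diam F →
      ENNReal.ofReal (c_F * ρ ^ D) ≤ μH[D] (F ∩ Metric.closedBall x ρ) ∧
      μH[D] (F ∩ Metric.closedBall x ρ) ≤ ENNReal.ofReal (C_F * ρ ^ D))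
    (ε₀ : ℝ) (hε₀ : ε₀ = (μH[D] F).toReal ^ (1 / D))
    (c : ℝ) (hc : c = max (4 * c_F ^ (-(1 / D)))
      (Metric.diam J * (μH[D] F).toReal ^ (-(1 / D))) - C_F ^ (-(1 / D)))
    (hlim : Tendsto (fun δ : ℝ => (Real.log δ⁻¹)⁻¹ *
        ∫ ε in Set.Ioc δ ε₀,
          ε ^ (D - d + 1) * (μH[(d:ℝ) - 1] (frontier (Metric.cthickening ε F))).toReal
            * ε⁻¹)
      (𝓝[>] 0) (𝓝 0)) :
    ∀ᵐ ε ∂(volume.restrict (Set.Ioo (0 : ℝ) ε₀)),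
      μH[(d:ℝ) - 1]
        {z : EuclideanSpace ℝ (Fin d) |
          z ∈ frontier (Metric.cthickening ε F) ∧ c * ε < Metric.infDist z Jᶜ} = 0 := by
  have hd1 : (1:ℝ) ≤ d := by exact_mod_cast hd
  have hs : (0:ℝ) ≤ (d:ℝ) - 1 := by linarith
  have hJne : J.Nonempty := hSOSC.mono fun x hx => interior_subset hx.2
  have : Nonempty (Fin d) := ⟨⟨0, hd⟩⟩
  have : Nonempty (Fin N) := ⟨⟨0, by omega⟩⟩
  have hJc : (interior J)ᶜ.Nonempty := by
    by_contra h
    rw [not_nonempty_iff_eq_empty, compl_empty_iff] at h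
    rw [h, closure_univ] at hJ_reg
    rw [hJ_reg] at hJ_cpt
    exact noncompact_univ _ hJ_cpt
  have hc1 : 1 ≤ c := by
    have h1 : 1 ≤ c_F ^ (-(1 / D)) :=
      Real.one_le_rpow_of_pos_of_le_one_of_nonpos hc_F.1 hc_F.2
        (by have : 0 < 1 / D := by positivity
            linarith)
    have h2 : C_F ^ (-(1 / D)) ≤ 1 :=
      Real.rpow_le_one_of_one_le_of_nonpos hC_F
        (by have : 0 < 1 / D := by positivity
            linarith)
    have h3 := le_max_left (4 * c_F ^ (-(1 / D)))
      (Metric.diam J * (μH[D] F).toReal ^ (-(1 / D)))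
    linarith
  rcases le_or_gt ε₀ 0 with hε0 | hε0
  · rw [Ioo_eq_empty (not_lt.2 hε0)]
    simp
  obtain ⟨ip, hip⟩ := Finite.exists_max r
  obtain ⟨iq, hiq⟩ := Finite.exists_min r
  obtain ⟨hp0, hp1⟩ := hr ip
  obtain ⟨hq0, hq1⟩ := hr iq
  set p := r ip
  set q := r iq
  set h : ℝ → ℝ≥0∞ := fun ε => μH[(d:ℝ) - 1]
    ({z : EuclideanSpace ℝ (Fin d) | infDist z F < infDist z (interior J)ᶜ} ∩
      (fun z => infDist z F) ⁻¹' {ε}) with hh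
  have hineq : ∀ ε, ∑ i, ENNReal.ofReal (r i ^ ((d:ℝ) - 1)) * h (ε / r i) ≤ h ε := fun ε =>
    slice_ineq hr hS hF_ne hF_cpt hF_self hJ_cpt hJ_reg hJ_sub hJ_disj hJne hJc hs ε
  have hm : Measurable h := measurable_slice_open hs
    (isOpen_lt (continuous_infDist_pt F) (continuous_infDist_pt _)) (continuous_infDist_pt F)
  set k : ℝ → ℝ≥0∞ := fun ε => ENNReal.ofReal (ε ^ (D - ((d:ℝ) - 1) - 1)) * h ε with hk
  have hkm : Measurable k := by fun_prop
  have hkle : ∀ ε, k ε ≤ ENNReal.ofReal (ε ^ (D - d)) *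
      μH[(d:ℝ) - 1] ((fun z => infDist z F) ⁻¹' {ε}) := by
    intro ε
    rw [hk]
    simp only
    rw [show D - ((d:ℝ) - 1) - 1 = D - d by ring]
    gcongr
    exact measure_mono inter_subset_right
  have hnull : ∀ m : ℕ, ∀ᵐ ε ∂(volume.restrict (Ioc (ε₀ * p ^ (m + 1)) (ε₀ * p ^ m))),
      h ε = 0 := by
    intro m
    set a := ε₀ * p ^ (m + 1) with ha
    set b := ε₀ * p ^ m with hb
    have ha0 : 0 < a := by positivity
    have hb0 : 0 < b := by positivity
    have hab' : a / p = b := by rw [ha, hb, pow_succ]; field_simp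
    have hab : a ≤ b := by
      rw [← hab', le_div_iff₀ hp0]
      nlinarith
    have hbε : b ≤ ε₀ := by
      rw [hb]
      exact mul_le_of_le_one_right hε0.le (pow_le_one₀ hp0.le hp1.le)
    have hbr : ∀ i, b ≤ a / r i := fun i => by
      rw [← hab']
      exact div_le_div_of_nonneg_left ha0.le (hr i).1 (hip i)
    set c0 := ∫⁻ ε in Ioc a b, k ε with hc0
    have hgrow : ∀ n : ℕ, n * c0 ≤ ∫⁻ ε in Ioc (a * q ^ n) b, k ε := by
      intro n
      induction n with
      | zero => simp
      | succ n ih =>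
        have hst := step_ineq hr hD_dim hineq hm (fun ε => rfl) (k := k) hab hbr hq0 hiq
          (δ := a * q ^ (n + 1)) (by positivity)
          (mul_le_of_le_one_right ha0.le (pow_le_one₀ hq0.le hq1.le))
        have e : a * q ^ (n + 1) / q = a * q ^ n := by
          rw [pow_succ]; field_simp
        rw [e] at hst
        refine le_trans ?_ hst
        push_cast
        rw [add_mul, one_mul, add_comm]
        gcongr
    have hle : ∀ n : ℕ, ∫⁻ ε in Ioc (a * q ^ n) b, k ε ≤
        ∫⁻ ε in Ioc (a * q ^ n) ε₀, ENNReal.ofReal (ε ^ (D - d)) *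
          μH[(d:ℝ) - 1] ((fun z => infDist z F) ⁻¹' {ε}) := fun n =>
      (lintegral_mono_set (Ioc_subset_Ioc_right hbε)).trans (lintegral_mono hkle)
    have hfin : ∀ n : ℕ, ∫⁻ ε in Ioc (a * q ^ n) ε₀, ENNReal.ofReal (ε ^ (D - d)) *
          μH[(d:ℝ) - 1] ((fun z => infDist z F) ⁻¹' {ε}) < ⊤ := fun n =>
      level_lintegral_lt_top hF_ne hF_cpt hd D (by positivity)
    have hc0z : c0 = 0 := by
      by_contra hne
      have hc0t : c0 ≠ ⊤ := by
        have := ((hgrow 1).trans (hle 1)).trans_lt (hfin 1)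
        simpa using this.ne
      refine no_lim (ENNReal.toReal_pos hne hc0t) ha0 hq0 hq1 (fun n => ?_) hlim
      rw [integral_eq_level hF_ne hF_cpt hd D (by positivity)]
      have := ENNReal.toReal_mono (hfin n).ne ((hgrow n).trans (hle n))
      simpa using this
    rw [hc0, lintegral_eq_zero_iff hkm] at hc0z
    filter_upwards [hc0z, ae_restrict_mem measurableSet_Ioc] with ε h1 h2
    have hpos : 0 < ε := ha0.trans h2.1
    have h3 : ENNReal.ofReal (ε ^ (D - ((d:ℝ) - 1) - 1)) * h ε = 0 := h1
    refine (mul_eq_zero.1 h3).resolve_left ?_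
    have : 0 < ε ^ (D - ((d:ℝ) - 1) - 1) := by positivity
    simpa using this
  have hsub : Ioo 0 ε₀ ⊆ ⋃ m : ℕ, Ioc (ε₀ * p ^ (m + 1)) (ε₀ * p ^ m) := by
    rintro x ⟨hx0, hx1⟩
    obtain ⟨m, h1, h2⟩ := exists_nat_pow_near_of_lt_one (x := x / ε₀) (by positivity)
      ((div_le_one hε0).2 hx1.le) hp0 hp1
    refine mem_iUnion.2 ⟨m, ?_, ?_⟩
    · rwa [lt_div_iff₀' hε0] at h1
    · rwa [div_le_iff₀' hε0] at h2
  have hall : ∀ᵐ ε ∂(volume.restrict (Ioo 0 ε₀)), h ε = 0 :=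
    ae_restrict_of_ae_restrict_of_subset hsub ((ae_restrict_iUnion_iff _ _).2 hnull)
  filter_upwards [hall, ae_restrict_mem measurableSet_Ioo] with ε h1 h2
  refine measure_mono_null ?_ h1
  rintro z ⟨hz1, hz2⟩
  have hz3 := (frontier_subset_level hF_ne h2.1.le).2 hz1
  refine ⟨?_, hz3⟩
  have hz4 : infDist z F = ε := hz3
  show infDist z F < infDist z (interior J)ᶜ
  rw [← closure_compl, infDist_closure, hz4]
  refine lt_of_le_of_lt ?_ hz2
  nlinarith [h2.1]
end

section
/- Assume the open set condition: J ⊆ ℝ^d is compact with J = cl(int J), ⋃_{j=1}^N S_j(J) ⊆ J, and S_j(int J) ∩ S_l(int J) = ∅ for j ≠ l (so that F ⊆ J). Let w = w₁…w_n ∈ {1,…,N}^n be a finite word, S_w := S_{w₁}∘⋯∘S_{w_n}, F_w := S_w(F), J_w := S_w(J). Let a ≥ 1, x ∈ F_w, and ε > 0 with 2aε < d(x, ℝ^d ∖ J_w). Then F(ε) ∩ B(x, aε) = F_w(ε) ∩ B(x, aε), where F_w(ε) := {y ∈ ℝ^d : d(y, F_w) ≤ ε} is the closed ε-parallel set of F_w.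 -/
open MeasureTheory Metric Filter Set
open scoped ENNReal Topology

lemma aux_int {X : Type*} [TopologicalSpace X] {f : X → X} (hc : Continuous f)
    (hi : Function.Injective f) {A : Set X} {q : X} (h : f q ∈ interior (f '' A)) :
    q ∈ interior A := by
  rw [mem_interior]
  refine ⟨f ⁻¹' interior (f '' A), ?_, isOpen_interior.preimage hc, h⟩
  intro u hu
  obtain ⟨v, hv, hvu⟩ := interior_subset hu
  rwa [← hi hvu]

lemma aux_FJ {X : Type*} [MetricSpace X] {N : ℕ} (S : Fin N → X → X)
    (r : Fin N → ℝ) (hr : ∀ i, r i ∈ Set.Ioo (0 : ℝ) 1)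
    (hS : ∀ i x y, dist (S i x) (S i y) = r i * dist x y)
    (F : Set X) (hF_ne : F.Nonempty) (hF_cpt : IsCompact F)
    (hF_self : F = ⋃ i, S i '' F)
    (J : Set X) (hJ_cpt : IsCompact J) (hne : J.Nonempty)
    (hJ_sub : ∀ i, S i '' J ⊆ J) : F ⊆ J := by
  obtain ⟨p, hp, hmax⟩ := hF_cpt.exists_isMaxOn hF_ne
    (Metric.continuous_infDist_pt J).continuousOn
  have h0 : Metric.infDist p J ≤ 0 := by
    have hp2 := hp
    rw [hF_self] at hp2
    obtain ⟨i, q, hq, hqp⟩ := mem_iUnion.1 hp2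
    obtain ⟨y, hy, hyd⟩ := hJ_cpt.exists_infDist_eq_dist hne q
    have h1 : Metric.infDist p J ≤ dist p (S i y) :=
      Metric.infDist_le_dist_of_mem (hJ_sub i ⟨y, hy, rfl⟩)
    rw [← hqp, hS, ← hyd, hqp] at h1
    have h2 : Metric.infDist q J ≤ Metric.infDist p J := hmax hq
    have h3 := (hr i).1
    have h4 := (hr i).2
    nlinarith [mul_le_mul_of_nonneg_left h2 h3.le]
  intro z hz
  have h1 : Metric.infDist z J ≤ Metric.infDist p J := hmax hz
  rw [hJ_cpt.isClosed.mem_iff_infDist_zero hne]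
  exact le_antisymm (h1.trans h0) Metric.infDist_nonneg

lemma aux_word_sub {X : Type*} {N : ℕ} (S : Fin N → X → X) (A : Set X)
    (h : ∀ i, S i '' A ⊆ A) (w : List (Fin N)) :
    (w.foldr (fun i g => S i ∘ g) id) '' A ⊆ A := by
  induction w with
  | nil => simp
  | cons i v ih =>
    rw [List.foldr_cons, image_comp]
    exact (image_mono ih).trans (h i)

lemma aux_key {X : Type*} [TopologicalSpace X] {N : ℕ} (S : Fin N → X → X)
    (hc : ∀ i, Continuous (S i)) (hi : ∀ i, Function.Injective (S i))
    (F : Set X) (hF_self : F = ⋃ i, S i '' F)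
    (J : Set X) (hFJ : F ⊆ J)
    (hJ_reg : J = closure (interior J))
    (hJ_sub : ∀ i, S i '' J ⊆ J)
    (hJ_disj : ∀ i j, i ≠ j → Disjoint (S i '' interior J) (S j '' interior J))
    (w : List (Fin N)) : ∀ z ∈ F, z ∈ interior ((w.foldr (fun i g => S i ∘ g) id) '' J) →
      z ∈ (w.foldr (fun i g => S i ∘ g) id) '' F := by
  induction w with
  | nil => intro z hz _; simpa using hz
  | cons i v ih =>
    intro z hz hzi
    rw [List.foldr_cons, image_comp] at hzi ⊢
    have hz2 := hz
    rw [hF_self] at hz2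
    obtain ⟨k, q, hq, rfl⟩ := mem_iUnion.1 hz2
    by_cases hk : k = i
    · subst hk
      exact ⟨q, ih q hq (aux_int (hc k) (hi k) hzi), rfl⟩
    · exfalso
      have hqJ : q ∈ closure (interior J) := hJ_reg ▸ hFJ hq
      have hcl : S k q ∈ closure (S k '' interior J) :=
        image_closure_subset_closure_image (hc k) ⟨q, hqJ, rfl⟩
      obtain ⟨z', h1, h2⟩ := mem_closure_iff.1 hcl _ isOpen_interior hzi
      have h3 : z' ∈ interior (S i '' J) :=
        interior_mono (image_mono (aux_word_sub S J hJ_sub v)) h1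
      obtain ⟨u, hu, rfl⟩ := interior_subset h3
      exact (Set.disjoint_left.1 (hJ_disj k i hk)) h2 ⟨u, aux_int (hc i) (hi i) h3, rfl⟩

/-- (Locality of parallel sets.) Under the open set condition for
`J`, if `w` is a finite word, `S_w` the corresponding composed similarity,
`F_w = S_w(F)`, `J_w = S_w(J)`, `a ≥ 1`, `x ∈ F_w` and `ε > 0` with
`2aε < d(x, ℝ^d ∖ J_w)`, then `F(ε) ∩ B(x,aε) = F_w(ε) ∩ B(x,aε)`. -/
theorem statement11 (d N : ℕ) (hd : 1 ≤ d) (hN : 2 ≤ N)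
    (S : Fin N → EuclideanSpace ℝ (Fin d) → EuclideanSpace ℝ (Fin d))
    (r : Fin N → ℝ) (hr : ∀ i, r i ∈ Set.Ioo (0 : ℝ) 1)
    (hS : ∀ i x y, dist (S i x) (S i y) = r i * dist x y)
    (F : Set (EuclideanSpace ℝ (Fin d)))
    (hF_ne : F.Nonempty) (hF_cpt : IsCompact F)
    (hF_self : F = ⋃ i, S i '' F)
    (J : Set (EuclideanSpace ℝ (Fin d))) (hJ_cpt : IsCompact J)
    (hJ_reg : J = closure (interior J))
    (hJ_sub : ∀ i, S i '' J ⊆ J)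
    (hJ_disj : ∀ i j, i ≠ j → Disjoint (S i '' interior J) (S j '' interior J))
    (w : List (Fin N))
    (a ε : ℝ) (ha : 1 ≤ a) (hε : 0 < ε)
    (x : EuclideanSpace ℝ (Fin d))
    (hx : x ∈ (w.foldr (fun i g => S i ∘ g) id) '' F)
    (hsep : 2 * a * ε < Metric.infDist x ((w.foldr (fun i g => S i ∘ g) id) '' J)ᶜ) :
    Metric.cthickening ε F ∩ Metric.closedBall x (a * ε)
      = Metric.cthickening ε ((w.foldr (fun i g => S i ∘ g) id) '' F)
          ∩ Metric.closedBall x (a * ε) := by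
  have hc : ∀ i, Continuous (S i) := fun i =>
    (LipschitzWith.of_dist_le_mul (K := ⟨r i, (hr i).1.le⟩) fun x y => (hS i x y).le).continuous
  have hi : ∀ i, Function.Injective (S i) := by
    intro i u v huv
    have h := hS i u v
    rw [huv, dist_self] at h
    exact dist_eq_zero.1 ((mul_eq_zero.1 h.symm).resolve_left (hr i).1.ne')
  have haε : ε ≤ a * ε := by nlinarith
  have hFs : ∀ i, S i '' F ⊆ F := by
    intro i
    conv_rhs => rw [hF_self]
    exact subset_iUnion (fun i => S i '' F) i
  have hne : J.Nonempty := by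
    rw [Set.nonempty_iff_ne_empty]
    rintro rfl
    rw [image_empty, compl_empty, Metric.infDist_zero_of_mem (mem_univ x)] at hsep
    nlinarith
  have hFJ := aux_FJ S r hr hS F hF_ne hF_cpt hF_self J hJ_cpt hne hJ_sub
  apply Subset.antisymm
  · rintro y ⟨hy, hyx⟩
    refine ⟨?_, hyx⟩
    rw [hF_cpt.cthickening_eq_biUnion_closedBall hε.le] at hy
    obtain ⟨z, hz, hyz⟩ := mem_iUnion₂.1 hy
    refine Metric.mem_cthickening_of_dist_le y z ε _ ?_ hyz
    refine aux_key S hc hi F hF_self J hFJ hJ_reg hJ_sub hJ_disj w z hz ?_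
    rw [mem_interior]
    refine ⟨Metric.ball x
      (Metric.infDist x ((w.foldr (fun i g => S i ∘ g) id) '' J)ᶜ),
      ?_, Metric.isOpen_ball, ?_⟩
    · intro u hu
      by_contra hcon
      have := Metric.infDist_le_dist_of_mem (x := x) (mem_compl hcon)
      rw [Metric.mem_ball, dist_comm] at hu
      linarith
    · rw [Metric.mem_ball]
      rw [Metric.mem_closedBall] at hyz hyx
      have := dist_triangle_left z x y
      linarith
  · exact inter_subset_inter_left _
      (Metric.cthickening_subset_of_subset ε (aux_word_sub S F hFs w))
end

section
/- Assume the open set condition: J ⊆ ℝ^d is compact with J = cl(int J), ⋃_{j=1}^N S_j(J) ⊆ J, and S_j(int J) ∩ S_l(int J) = ∅ for j ≠ l. Let w = w₁…w_n ∈ {1,…,N}^n be a finite word, S_w := S_{w₁}∘⋯∘S_{w_n}, r_w := r_{w₁}⋯r_{w_n}, F_w := S_w(F), J_w := S_w(J). Let a ≥ 1, x ∈ F_w, and ε > 0 with 2aε < d(x, ℝ^d ∖ J_w). Then λ_d(F(ε) ∩ B(x, aε)) = r_w^d · λ_d(F(r_w^{−1}ε) ∩ B(S_w^{−1}(x), a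 r_w^{−1} ε)), where λ_d is Lebesgue measure on ℝ^d. -/
open MeasureTheory Metric Filter Set
open scoped ENNReal Topology


theorem aux_sim {d : ℕ} (f : EuclideanSpace ℝ (Fin d) → EuclideanSpace ℝ (Fin d)) (c : ℝ)
    (hc : 0 < c) (hf : ∀ x y, dist (f x) (f y) = c * dist x y) :
    ∃ (L : EuclideanSpace ℝ (Fin d) ≃ₗᵢ[ℝ] EuclideanSpace ℝ (Fin d))
      (b : EuclideanSpace ℝ (Fin d)), ∀ x, f x = c • L x + b := by
  have hiso : Isometry (fun x => c⁻¹ • f x) := by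
    refine Isometry.of_dist_eq fun x y => ?_
    rw [dist_smul₀, hf, Real.norm_eq_abs, abs_of_pos (inv_pos.2 hc)]
    field_simp
  let T := hiso.affineIsometryOfStrictConvexSpace
  refine ⟨T.linearIsometry.toLinearIsometryEquiv rfl, f 0, fun x => ?_⟩
  have h1 : T x = T.linearIsometry x + T 0 := by
    have := T.map_vadd 0 x
    simpa using this
  have h2 : ∀ x, T x = c⁻¹ • f x := fun x => rfl
  rw [h2, h2] at h1
  have h3 : T.linearIsometry x = c⁻¹ • (f x - f 0) := by
    rw [smul_sub, h1]; simp
  rw [LinearIsometry.coe_toLinearIsometryEquiv, h3, smul_inv_smul₀ hc.ne']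
  simp

theorem aux_homeo {d : ℕ} (f : EuclideanSpace ℝ (Fin d) → EuclideanSpace ℝ (Fin d)) (c : ℝ)
    (hc : 0 < c) (hf : ∀ x y, dist (f x) (f y) = c * dist x y) :
    ∃ h : EuclideanSpace ℝ (Fin d) ≃ₜ EuclideanSpace ℝ (Fin d), ⇑h = f := by
  obtain ⟨L, b, h⟩ := aux_sim f c hc hf
  refine ⟨(L.toHomeomorph.trans (Homeomorph.smulOfNeZero c hc.ne')).trans
    (Homeomorph.addRight b), ?_⟩
  ext1 x
  rw [h]; rfl

theorem aux_vol {d : ℕ} (f : EuclideanSpace ℝ (Fin d) → EuclideanSpace ℝ (Fin d)) (c : ℝ)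
    (hc : 0 < c) (hf : ∀ x y, dist (f x) (f y) = c * dist x y)
    (s : Set (EuclideanSpace ℝ (Fin d))) :
    volume (f '' s) = ENNReal.ofReal (c ^ d) * volume s := by
  obtain ⟨L, b, h⟩ := aux_sim f c hc hf
  have : f '' s = (fun z => z + b) '' ((fun z => c • z) '' (L '' s)) := by
    rw [Set.image_image, Set.image_image]
    exact Set.image_congr fun x _ => h x
  have hL : volume (L '' s) = volume s := by
    rw [L.image_eq_preimage_symm]
    exact L.symm.measurePreserving.measure_preimage_equiv (f := L.symm.toMeasurableEquiv) s
  rw [this, Set.image_add_right, measure_preimage_add_right, Set.image_smul,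
    Measure.addHaar_smul, hL, finrank_euclideanSpace_fin, abs_of_pos (pow_pos hc d)]

theorem aux_word {d N : ℕ} (S : Fin N → EuclideanSpace ℝ (Fin d) → EuclideanSpace ℝ (Fin d))
    (r : Fin N → ℝ) (hr : ∀ i, r i ∈ Set.Ioo (0 : ℝ) 1)
    (hS : ∀ i x y, dist (S i x) (S i y) = r i * dist x y) (w : List (Fin N)) :
    0 < (w.map r).prod ∧ ∀ x y, dist ((w.foldr (fun i g => S i ∘ g) id) x)
      ((w.foldr (fun i g => S i ∘ g) id) y) = (w.map r).prod * dist x y := by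
  induction w with
  | nil => simp
  | cons i w ih =>
    refine ⟨?_, fun x y => ?_⟩
    · simpa using mul_pos (hr i).1 ih.1
    · simp only [List.foldr_cons, Function.comp_apply, hS, ih.2, List.map_cons, List.prod_cons]
      ring

theorem aux_sub {d N : ℕ} (S : Fin N → EuclideanSpace ℝ (Fin d) → EuclideanSpace ℝ (Fin d))
    (r : Fin N → ℝ) (hr : ∀ i, r i ∈ Set.Ioo (0 : ℝ) 1)
    (hS : ∀ i x y, dist (S i x) (S i y) = r i * dist x y)
    (F : Set (EuclideanSpace ℝ (Fin d)))
    (hF_ne : F.Nonempty) (hF_cpt : IsCompact F)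
    (hF_self : F = ⋃ i, S i '' F)
    (J : Set (EuclideanSpace ℝ (Fin d))) (hJ_cpt : IsCompact J)
    (hJ_sub : ∀ i, S i '' J ⊆ J) (hJ_ne : J.Nonempty) : F ⊆ J := by
  obtain ⟨p, hp, hmax⟩ := hF_cpt.exists_isMaxOn hF_ne
    (f := fun z => infDist z J) (continuous_infDist_pt J).continuousOn
  have hp' := hp
  rw [hF_self] at hp'
  obtain ⟨i, q, hq, rfl⟩ := mem_iUnion.1 hp'
  have hqm : infDist q J ≤ infDist (S i q) J := hmax hq
  obtain ⟨u, hu, hqu⟩ := hJ_cpt.exists_infDist_eq_dist hJ_ne q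
  have h1 : infDist (S i q) J ≤ r i * infDist q J := by
    rw [hqu, ← hS]
    exact infDist_le_dist_of_mem (hJ_sub i ⟨u, hu, rfl⟩)
  have h0 : infDist (S i q) J ≤ 0 := by
    have := (hr i).1; have := (hr i).2
    have := infDist_nonneg (x := q) (s := J)
    nlinarith
  intro z hz
  have hz0 : infDist z J ≤ infDist (S i q) J := hmax hz
  rw [hJ_cpt.isClosed.mem_iff_infDist_zero hJ_ne]
  exact le_antisymm (hz0.trans h0) infDist_nonneg

theorem aux_loc {d N : ℕ} (S : Fin N → EuclideanSpace ℝ (Fin d) → EuclideanSpace ℝ (Fin d))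
    (r : Fin N → ℝ) (hr : ∀ i, r i ∈ Set.Ioo (0 : ℝ) 1)
    (hS : ∀ i x y, dist (S i x) (S i y) = r i * dist x y)
    (F : Set (EuclideanSpace ℝ (Fin d)))
    (hF_self : F = ⋃ i, S i '' F)
    (J : Set (EuclideanSpace ℝ (Fin d)))
    (hJ_reg : J = closure (interior J))
    (hJ_sub : ∀ i, S i '' J ⊆ J)
    (hJ_disj : ∀ i j, i ≠ j → Disjoint (S i '' interior J) (S j '' interior J))
    (hFJ : F ⊆ J) (w : List (Fin N)) :
    (w.foldr (fun i g => S i ∘ g) id) '' interior J ⊆ interior J ∧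
    F ∩ (w.foldr (fun i g => S i ∘ g) id) '' interior J ⊆
      (w.foldr (fun i g => S i ∘ g) id) '' F := by
  induction w with
  | nil => simp
  | cons i w ih =>
    obtain ⟨h, hh⟩ := aux_homeo (S i) (r i) (hr i).1 (hS i)
    have hopen : IsOpen (S i '' interior J) := by
      rw [← hh]; exact h.isOpenMap _ isOpen_interior
    have hinj : Function.Injective (S i) := by rw [← hh]; exact h.injective
    simp only [List.foldr_cons, Set.image_comp]
    constructor
    · refine (image_mono ih.1).trans (interior_maximal ?_ hopen)
      exact (image_mono interior_subset).trans (hJ_sub i)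
    · rintro p ⟨hpF, q', ⟨u, hu, rfl⟩, rfl⟩
      rw [hF_self] at hpF
      obtain ⟨j, q, hq, hqe⟩ := mem_iUnion.1 hpF
      by_cases hij : i = j
      · subst hij
        have := hinj hqe
        subst this
        exact ⟨_, ih.2 ⟨hq, u, hu, rfl⟩, rfl⟩
      · exfalso
        have hcont : Continuous (S j) := by
          obtain ⟨h', hh'⟩ := aux_homeo (S j) (r j) (hr j).1 (hS j)
          rw [← hh']; exact h'.continuous
        have h1 : S j q ∈ closure (S j '' interior J) := by
          apply image_closure_subset_closure_image hcont
          rw [← hJ_reg]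
          exact ⟨q, hFJ hq, rfl⟩
        have h2 : S j q ∈ S i '' interior J := by
          rw [hqe]
          exact ⟨_, ih.1 ⟨u, hu, rfl⟩, rfl⟩
        exact ((hJ_disj i j hij).closure_right hopen).le_bot ⟨h2, h1⟩

theorem aux_wF {d N : ℕ} (S : Fin N → EuclideanSpace ℝ (Fin d) → EuclideanSpace ℝ (Fin d))
    (F : Set (EuclideanSpace ℝ (Fin d)))
    (hF_self : F = ⋃ i, S i '' F) (w : List (Fin N)) :
    ∀ q ∈ F, (w.foldr (fun i g => S i ∘ g) id) q ∈ F := by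
  induction w with
  | nil => simp
  | cons i w ih =>
    intro q hq
    rw [hF_self]
    exact mem_iUnion.2 ⟨i, _, ih q hq, rfl⟩

/-- (Scaling of localized volume.) Under the open set condition for
`J`, if `w` is a finite word with composed similarity `S_w`, contraction ratio
`r_w = r_{w₁}⋯r_{w_n}`, `F_w = S_w(F)`, `J_w = S_w(J)`, `a ≥ 1`, `x ∈ F_w` and
`ε > 0` with `2aε < d(x, ℝ^d ∖ J_w)`, then for the (unique) point `y` with
`S_w(y) = x` one has
`λ_d(F(ε) ∩ B(x,aε)) = r_w^d · λ_d(F(r_w⁻¹ε) ∩ B(y, a r_w⁻¹ ε))`. -/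
theorem statement12 (d N : ℕ) (hd : 1 ≤ d) (hN : 2 ≤ N)
    (S : Fin N → EuclideanSpace ℝ (Fin d) → EuclideanSpace ℝ (Fin d))
    (r : Fin N → ℝ) (hr : ∀ i, r i ∈ Set.Ioo (0 : ℝ) 1)
    (hS : ∀ i x y, dist (S i x) (S i y) = r i * dist x y)
    (F : Set (EuclideanSpace ℝ (Fin d)))
    (hF_ne : F.Nonempty) (hF_cpt : IsCompact F)
    (hF_self : F = ⋃ i, S i '' F)
    (J : Set (EuclideanSpace ℝ (Fin d))) (hJ_cpt : IsCompact J)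
    (hJ_reg : J = closure (interior J))
    (hJ_sub : ∀ i, S i '' J ⊆ J)
    (hJ_disj : ∀ i j, i ≠ j → Disjoint (S i '' interior J) (S j '' interior J))
    (w : List (Fin N))
    (a ε : ℝ) (ha : 1 ≤ a) (hε : 0 < ε)
    (x : EuclideanSpace ℝ (Fin d))
    (hx : x ∈ (w.foldr (fun i g => S i ∘ g) id) '' F)
    (hsep : 2 * a * ε < Metric.infDist x ((w.foldr (fun i g => S i ∘ g) id) '' J)ᶜ) :
    ∀ y : EuclideanSpace ℝ (Fin d), (w.foldr (fun i g => S i ∘ g) id) y = x →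
      volume (Metric.cthickening ε F ∩ Metric.closedBall x (a * ε))
        = ENNReal.ofReal ((w.map r).prod ^ d) *
            volume (Metric.cthickening (((w.map r).prod)⁻¹ * ε) F
              ∩ Metric.closedBall y (a * (((w.map r).prod)⁻¹ * ε))) := by
  intro y hy
  obtain ⟨hc, hf⟩ := aux_word S r hr hS w
  have hwF := aux_wF S F hF_self w
  have hJ_ne : J.Nonempty := by
    by_contra hne
    rw [not_nonempty_iff_eq_empty] at hne
    rw [hne, image_empty, compl_empty, infDist_zero_of_mem (mem_univ x)] at hsep
    nlinarith
  have hFJ := aux_sub S r hr hS F hF_ne hF_cpt hF_self J hJ_cpt hJ_sub hJ_ne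
  have hloc := (aux_loc S r hr hS F hF_self J hJ_reg hJ_sub hJ_disj hFJ w).2
  set f := w.foldr (fun i g => S i ∘ g) id
  set c := (w.map r).prod
  obtain ⟨h, hh⟩ := aux_homeo f c hc hf
  have hball : ball x (infDist x (f '' J)ᶜ) ⊆ f '' interior J := by
    have h1 : f '' interior J = interior (f '' J) := by
      rw [← hh]; exact h.image_interior J
    rw [h1]
    refine interior_maximal ?_ isOpen_ball
    intro z hz
    by_contra hz'
    have := infDist_le_dist_of_mem (x := x) (show z ∈ (f '' J)ᶜ from hz')
    rw [mem_ball, dist_comm] at hz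
    linarith
  rw [← aux_vol f c hc hf]
  congr 1
  have hsc : ∀ t s : ℝ, c * t ≤ s ↔ t ≤ c⁻¹ * s := fun t s => (le_inv_mul_iff₀ hc).symm
  have hmem : ∀ (δ : ℝ), 0 ≤ δ → ∀ z, z ∈ cthickening δ F ↔ ∃ p ∈ F, dist z p ≤ δ := by
    intro δ hδ z
    rw [hF_cpt.cthickening_eq_biUnion_closedBall hδ]
    simp
  ext z
  constructor
  · rintro ⟨hz1, hz2⟩
    obtain ⟨z', hz'⟩ : ∃ z', f z' = z := by rw [← hh]; exact h.surjective z
    subst hz'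
    obtain ⟨p, hp, hzp⟩ := (hmem ε hε.le _).1 hz1
    rw [mem_closedBall] at hz2
    have hpx : dist p x < infDist x (f '' J)ᶜ := by
      have := dist_triangle_left p x (f z')
      nlinarith
    obtain ⟨q, hq, rfl⟩ := hloc ⟨hp, hball hpx⟩
    refine ⟨z', ⟨(hmem _ (by positivity) _).2 ⟨q, hq, ?_⟩, ?_⟩, rfl⟩
    · rwa [hf, hsc] at hzp
    · rw [← hy, hf, hsc] at hz2
      rw [mem_closedBall]
      linarith
  · rintro ⟨z', ⟨hz1, hz2⟩, rfl⟩
    obtain ⟨q, hq, hzq⟩ := (hmem _ (by positivity) _).1 hz1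
    rw [mem_closedBall] at hz2
    refine ⟨(hmem _ hε.le _).2 ⟨f q, hwF q hq, ?_⟩, ?_⟩
    · rwa [hf, hsc]
    · rw [mem_closedBall, ← hy, hf, hsc]
      linarith
end

section
/- Assume the SOSC holds with respect to J. Then ∫_F |ln d(y, ℝ^d ∖ J)| dμ_F(y) < ∞; in particular d(y, ℝ^d ∖ J) > 0 for μ_F-almost every y ∈ F. -/
open MeasureTheory Metric Filter Set
open scoped ENNReal Topology

namespace St14

variable {d : ℕ}

local notation "E" => EuclideanSpace ℝ (Fin d)

lemma surj (S : E → E) (r : ℝ) (hr : 0 < r)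
    (hS : ∀ x y, dist (S x) (S y) = r * dist x y) : Function.Surjective S := by
  have hT : Isometry (fun x => r⁻¹ • S x) := by
    apply Isometry.of_dist_eq
    intro x y
    rw [dist_smul₀, hS, Real.norm_eq_abs, abs_of_pos (inv_pos.2 hr)]
    field_simp
  let A := hT.affineIsometryOfStrictConvexSpace
  let B := A.toAffineIsometryEquiv rfl
  intro z
  obtain ⟨u, hu⟩ := B.surjective (r⁻¹ • z)
  refine ⟨u, ?_⟩
  have h : r⁻¹ • S u = r⁻¹ • z := hu
  exact smul_right_injective _ (inv_ne_zero hr.ne') h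

lemma infDist_ge (S : E → E) (r : ℝ) (hr : 0 < r)
    (hS : ∀ x y, dist (S x) (S y) = r * dist x y) (J : Set E) (hJ : S '' J ⊆ J)
    (hne : (Jᶜ).Nonempty) (y : E) : r * infDist y Jᶜ ≤ infDist (S y) Jᶜ := by
  rw [le_infDist hne]
  intro z hz
  obtain ⟨u, rfl⟩ := surj S r hr hS z
  rw [hS]
  have : u ∈ Jᶜ := fun hu => hz (hJ ⟨u, hu, rfl⟩)
  gcongr
  exact infDist_le_dist_of_mem this

lemma meas_le (S : E → E) (r : ℝ) (hr : 0 < r)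
    (hS : ∀ x y, dist (S x) (S y) = r * dist x y) (F : Set E) (D : ℝ) (hD : 0 < D)
    (f : E → ℝ≥0∞) (hf : Measurable f) :
    ∫⁻ y in S '' F, f y ∂μH[D] ≤ ENNReal.ofReal (r ^ D) * ∫⁻ y in F, f (S y) ∂μH[D] := by
  have hL : LipschitzWith r.toNNReal S := by
    apply LipschitzWith.of_dist_le_mul
    intro x y
    rw [hS, Real.coe_toNNReal _ hr.le]
  have hm : Measurable S := hL.continuous.measurable
  rw [← lintegral_map hf hm, ← smul_eq_mul, ← lintegral_smul_measure]
  apply lintegral_mono' _ le_rfl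
  rw [Measure.le_iff]
  intro A hA
  rw [Measure.restrict_apply hA, Measure.smul_apply, Measure.map_apply hm hA,
    Measure.restrict_apply (hm hA), smul_eq_mul]
  have : A ∩ S '' F = S '' (S ⁻¹' A ∩ F) := by
    rw [inter_comm (S ⁻¹' A), image_inter_preimage, inter_comm]
  rw [this]
  refine (hL.hausdorffMeasure_image_le hD.le _).trans ?_
  rw [← ENNReal.ofReal_rpow_of_pos hr]
  rfl

lemma step {N : ℕ}
    (S : Fin N → E → E) (r : Fin N → ℝ) (hr : ∀ i, r i ∈ Set.Ioo (0 : ℝ) 1)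
    (hS : ∀ i x y, dist (S i x) (S i y) = r i * dist x y) (F : Set E)
    (hF_self : F = ⋃ i, S i '' F) (D : ℝ) (hD : 0 < D)
    (f : E → ℝ≥0∞) (hf : Measurable f) :
    ∫⁻ y in F, f y ∂μH[D] ≤
      ∑ i, ENNReal.ofReal (r i ^ D) * ∫⁻ y in F, f (S i y) ∂μH[D] := by
  conv_lhs => rw [hF_self]
  refine (lintegral_iUnion_le _ _).trans ?_
  rw [tsum_fintype]
  exact Finset.sum_le_sum fun i _ => meas_le (S i) (r i) (hr i).1 (hS i) F D hD f hf

lemma words {N : ℕ}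
    (S : Fin N → E → E) (r : Fin N → ℝ) (hr : ∀ i, r i ∈ Set.Ioo (0 : ℝ) 1)
    (hS : ∀ i x y, dist (S i x) (S i y) = r i * dist x y) (F : Set E) (hFm : MeasurableSet F)
    (hF_self : F = ⋃ i, S i '' F) (D : ℝ) (hD : 0 < D) (hD_dim : ∑ i, r i ^ D = 1)
    (R : ℝ) (hR0 : 0 ≤ R) (hR : ∀ i, r i ≤ R) (l : ℝ≥0∞) (hl : l ≠ ⊤) (x : E) (hx : x ∈ F)
    (n : ℕ) : ∃ (T : E → E) (z : E) (p q L : ℝ≥0∞), z ∈ F ∧ T z = x ∧ Measurable T ∧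
      (∀ y y', dist (T y) (T y') ≤ R ^ n * dist y y') ∧ p + q = 1 ∧ p ≠ 0 ∧ L ≠ ⊤ ∧
      ∀ f : E → ℝ≥0∞, Measurable f → (∀ i y, f (S i y) ≤ f y + l) →
        (∀ y, f (T y) ≤ f y + L) ∧
        ∫⁻ y in F, f y ∂μH[D] ≤ p * (∫⁻ y in F, f (T y) ∂μH[D]) +
          q * (∫⁻ y in F, (f y + L) ∂μH[D]) := by
  induction n with
  | zero =>
    refine ⟨id, x, 1, 0, 0, hx, rfl, measurable_id, by simp, by simp, by simp, by simp, ?_⟩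
    intro f _ _
    simp
  | succ n ih =>
    obtain ⟨T, z, p, q, L, hz, hTz, hTm, hTd, hpq, hp, hL, H⟩ := ih
    have hz' := hz
    rw [hF_self] at hz'
    obtain ⟨j, z', hz'F, hj⟩ := mem_iUnion.1 hz'
    have hSm : ∀ i, Measurable (S i) := fun i =>
      (LipschitzWith.of_dist_le_mul (K := (r i).toNNReal) (fun x y => by
        rw [hS, Real.coe_toNNReal _ (hr i).1.le])).continuous.measurable
    set P : Fin N → ℝ≥0∞ := fun i => ENNReal.ofReal (r i ^ D) with hP
    have hPs : P j + ∑ i ∈ Finset.univ.erase j, P i = 1 := by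
      rw [Finset.add_sum_erase _ _ (Finset.mem_univ j), hP,
        ← ENNReal.ofReal_sum_of_nonneg (fun i _ => (Real.rpow_pos_of_pos (hr i).1 _).le),
        hD_dim, ENNReal.ofReal_one]
    set Q := ∑ i ∈ Finset.univ.erase j, P i with hQ
    refine ⟨T ∘ S j, z', p * P j, p * Q + q, L + l, hz'F, by simp [hj, hTz], hTm.comp (hSm j),
      ?_, ?_, ?_, by simp [hL, hl], ?_⟩
    · intro y y'
      calc dist (T (S j y)) (T (S j y')) ≤ R ^ n * dist (S j y) (S j y') := hTd _ _
        _ = R ^ n * (r j * dist y y') := by rw [hS]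
        _ ≤ R ^ n * (R * dist y y') := by gcongr; exact hR j
        _ = _ := by ring
    · rw [← add_assoc, ← mul_add, hPs, mul_one, hpq]
    · refine mul_ne_zero hp ?_
      simp only [hP, ne_eq, ENNReal.ofReal_eq_zero, not_le]
      exact Real.rpow_pos_of_pos (hr j).1 _
    · intro f hf hfS
      obtain ⟨H1, H2⟩ := H f hf hfS
      have H3 : ∀ i y, f (T (S i y)) ≤ f y + (L + l) := fun i y =>
        calc f (T (S i y)) ≤ f (S i y) + L := H1 _
          _ ≤ f y + l + L := by gcongr; exact hfS i y
          _ = _ := by ring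
      refine ⟨H3 j, ?_⟩
      have H4 := step S r hr hS F hF_self D hD (fun y => f (T y)) (hf.comp hTm)
      rw [← Finset.add_sum_erase _ _ (Finset.mem_univ j)] at H4
      set I := ∫⁻ y in F, (f y + (L + l)) ∂μH[D]
      have H5 : ∑ i ∈ Finset.univ.erase j,
          ENNReal.ofReal (r i ^ D) * ∫⁻ y in F, f (T (S i y)) ∂μH[D] ≤ Q * I := by
        rw [hQ, Finset.sum_mul]
        refine Finset.sum_le_sum fun i _ => ?_
        gcongr
        exact lintegral_mono fun y => H3 i y
      have H6 : ∫⁻ y in F, (f y + L) ∂μH[D] ≤ I :=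
        lintegral_mono fun y => by
          change f y + L ≤ f y + (L + l)
          gcongr
          exact le_self_add
      calc _ ≤ _ := H2
        _ ≤ p * (P j * (∫⁻ y in F, f (T (S j y)) ∂μH[D]) + Q * I) + q * I := by
          gcongr
          exact H4.trans (by gcongr)
        _ = _ := by simp only [Function.comp]; ring

lemma finite_int {N : ℕ} (hd : 1 ≤ d)
    (S : Fin N → E → E) (r : Fin N → ℝ) (hr : ∀ i, r i ∈ Set.Ioo (0 : ℝ) 1)
    (hS : ∀ i x y, dist (S i x) (S i y) = r i * dist x y) (F : Set E) (hF_cpt : IsCompact F)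
    (hF_self : F = ⋃ i, S i '' F) (D : ℝ) (hD : 0 < D) (hD_dim : ∑ i, r i ^ D = 1)
    (J : Set E) (hJne : (Jᶜ).Nonempty)
    (hJ_sub : ∀ i, S i '' J ⊆ J) (hSOSC : (F ∩ interior J).Nonempty)
    (hfin : μH[D] F ≠ ⊤) (f : E → ℝ≥0∞)
    (hfdef : f = fun y => if infDist y Jᶜ = 0 then ⊤ else
      ENNReal.ofReal (-Real.log (infDist y Jᶜ))) :
    Measurable f ∧ ∫⁻ y in F, f y ∂μH[D] < ⊤ := by
  have hdm : Measurable (fun y : E => infDist y Jᶜ) := measurable_infDist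
  have hfm : Measurable f := by
    rw [hfdef]
    refine Measurable.ite (hdm (measurableSet_singleton 0)) measurable_const ?_
    exact (Real.measurable_log.comp hdm).neg.ennreal_ofReal
  refine ⟨hfm, ?_⟩
  obtain ⟨x, hxF, hxJ⟩ := hSOSC
  obtain ⟨ε, hε, hball⟩ := Metric.isOpen_iff.1 isOpen_interior x hxJ
  -- ratio bound
  obtain ⟨R, hR0, hR1, hR⟩ : ∃ R : ℝ, 0 ≤ R ∧ R < 1 ∧ ∀ i, r i ≤ R := by
    have hx' := hxF
    rw [hF_self] at hx'
    obtain ⟨j, -⟩ := mem_iUnion.1 hx'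
    have : Nonempty (Fin N) := ⟨j⟩
    obtain ⟨k, hk⟩ := Finite.exists_max r
    exact ⟨r k, (hr k).1.le, (hr k).2, hk⟩
  set l : ℝ≥0∞ := ∑ i, ENNReal.ofReal (-Real.log (r i)) with hldef
  have hl : l ≠ ⊤ := by simp [hldef]
  have hfS : ∀ i y, f (S i y) ≤ f y + l := by
    intro i y
    by_cases hy : infDist y Jᶜ = 0
    · simp [hfdef, hy]
    · have hy0 : 0 < infDist y Jᶜ := lt_of_le_of_ne infDist_nonneg (Ne.symm hy)
      have h1 := infDist_ge (S i) (r i) (hr i).1 (hS i) J (hJ_sub i) hJne y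
      have h2 : 0 < r i * infDist y Jᶜ := mul_pos (hr i).1 hy0
      have h3 := Real.log_le_log h2 h1
      rw [Real.log_mul (hr i).1.ne' hy] at h3
      simp only [hfdef, hy, (h2.trans_le h1).ne', if_false]
      calc ENNReal.ofReal (-Real.log (infDist (S i y) Jᶜ))
          ≤ ENNReal.ofReal (-Real.log (infDist y Jᶜ) + -Real.log (r i)) :=
            ENNReal.ofReal_le_ofReal (by linarith)
        _ ≤ _ := ENNReal.ofReal_add_le
        _ ≤ _ := by
          gcongr
          exact Finset.single_le_sum (f := fun i => ENNReal.ofReal (-Real.log (r i)))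
            (fun _ _ => zero_le) (Finset.mem_univ i)
  obtain ⟨M, hM⟩ := Metric.isBounded_iff.1 hF_cpt.isBounded
  obtain ⟨n, hn⟩ : ∃ n : ℕ, R ^ n * M < ε / 2 := by
    have : Tendsto (fun n : ℕ => R ^ n * M) atTop (𝓝 (0 * M)) :=
      (tendsto_pow_atTop_nhds_zero_of_lt_one hR0 hR1).mul_const M
    rw [zero_mul] at this
    exact (this.eventually (gt_mem_nhds (half_pos hε))).exists
  obtain ⟨T, z, p, q, L, hz, hTz, hTm, hTd, hpq, hp, hL, H⟩ :=
    words S r hr hS F hF_cpt.measurableSet hF_self D hD hD_dim R hR0 hR l hl x hxF n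
  set C : ℝ≥0∞ := ENNReal.ofReal (-Real.log (ε / 2)) with hC
  have hTC : ∀ y ∈ F, f (T y) ≤ C := by
    intro y hy
    have h1 : dist (T y) x < ε / 2 := by
      rw [← hTz]
      refine (hTd _ _).trans_lt (lt_of_le_of_lt ?_ hn)
      have := hM hy hz
      gcongr
    have h2 : ε / 2 ≤ infDist (T y) Jᶜ := by
      rw [le_infDist hJne]
      intro w hw
      by_contra! hlt
      apply hw
      apply interior_subset
      apply hball
      rw [mem_ball]
      have := dist_triangle_left w x (T y)
      linarith
    have h0 : 0 < ε / 2 := half_pos hε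
    simp only [hfdef, (h0.trans_le h2).ne', if_false, hC]
    apply ENNReal.ofReal_le_ofReal
    have := Real.log_le_log h0 h2
    linarith
  set c := μH[D] F with hc
  have hp1 : p ≤ 1 := hpq ▸ le_self_add
  have hq1 : q ≤ 1 := hpq ▸ le_add_self
  have hpt : p ≠ ⊤ := (hp1.trans_lt ENNReal.one_lt_top).ne
  have hqt : q ≠ ⊤ := (hq1.trans_lt ENNReal.one_lt_top).ne
  set K := (p * (C * c) + q * (L * c)) / p with hK
  have hKt : K < ⊤ := by
    apply ENNReal.div_lt_top _ hp
    have : C ≠ ⊤ := ENNReal.ofReal_ne_top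
    finiteness
  have key : ∀ m : ℕ, ∫⁻ y in F, min (m : ℝ≥0∞) (f y) ∂μH[D] ≤ K := by
    intro m
    have hgm : Measurable (fun y => min (m : ℝ≥0∞) (f y)) := measurable_const.min hfm
    obtain ⟨-, h2⟩ := H (fun y => min (m : ℝ≥0∞) (f y)) hgm (by
      intro i y
      rw [← min_add_add_right]
      exact min_le_min le_self_add (hfS i y))
    set I := ∫⁻ y in F, min (m : ℝ≥0∞) (f y) ∂μH[D] with hI
    have hIt : I ≠ ⊤ := by
      have : I ≤ ∫⁻ y in F, (m : ℝ≥0∞) ∂μH[D] := lintegral_mono fun y => min_le_left _ _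
      rw [setLIntegral_const] at this
      exact (this.trans_lt (ENNReal.mul_lt_top (by simp) hfin.lt_top)).ne
    have h3 : ∫⁻ y in F, min (m : ℝ≥0∞) (f (T y)) ∂μH[D] ≤ C * c := by
      rw [hc, ← setLIntegral_const]
      exact setLIntegral_mono' hF_cpt.measurableSet fun y hy =>
        (min_le_right _ _).trans (hTC y hy)
    have h4 : ∫⁻ y in F, (min (m : ℝ≥0∞) (f y) + L) ∂μH[D] = I + L * c := by
      rw [lintegral_add_left hgm, setLIntegral_const]
    rw [h4] at h2
    have h5 : q * I + p * I ≤ q * I + (p * (C * c) + q * (L * c)) := by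
      calc q * I + p * I = (p + q) * I := by ring
        _ = I := by rw [hpq, one_mul]
        _ ≤ _ := h2
        _ ≤ p * (C * c) + q * (I + L * c) := by gcongr
        _ = _ := by ring
    have h6 := (ENNReal.add_le_add_iff_left (ENNReal.mul_ne_top hqt hIt)).1 h5
    rw [hK, ENNReal.le_div_iff_mul_le (Or.inl hp) (Or.inl hpt), mul_comm]
    exact h6
  have hsup : ∀ y, f y = ⨆ m : ℕ, min (m : ℝ≥0∞) (f y) := by
    intro y
    have h : (⨆ m : ℕ, (m : ℝ≥0∞) ⊓ f y) = (⨆ m : ℕ, (m : ℝ≥0∞)) ⊓ f y := (iSup_inf_eq _ _).symm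
    rw [ENNReal.iSup_natCast, top_inf_eq] at h
    exact h.symm
  calc ∫⁻ y in F, f y ∂μH[D] = ∫⁻ y in F, ⨆ m : ℕ, min (m : ℝ≥0∞) (f y) ∂μH[D] :=
        lintegral_congr hsup
    _ = ⨆ m : ℕ, ∫⁻ y in F, min (m : ℝ≥0∞) (f y) ∂μH[D] := by
        apply lintegral_iSup (fun m => measurable_const.min hfm)
        intro a b hab y
        exact min_le_min_right _ (by exact_mod_cast hab)
    _ ≤ K := iSup_le key
    _ < ⊤ := hKt

end St14

/-- Under the strong open set condition with respect to `J`, the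
logarithm of the distance to the complement of `J` is `μ_F`-integrable:
`∫_F |ln d(y, ℝ^d ∖ J)| dμ_F(y) < ∞`, where `μ_F = H^D(F ∩ ·)/H^D(F)`; in
particular `d(y, ℝ^d ∖ J) > 0` for `μ_F`-almost every `y`. -/
theorem statement14 (d N : ℕ) (hd : 1 ≤ d) (hN : 2 ≤ N)
    (S : Fin N → EuclideanSpace ℝ (Fin d) → EuclideanSpace ℝ (Fin d))
    (r : Fin N → ℝ) (hr : ∀ i, r i ∈ Set.Ioo (0 : ℝ) 1)
    (hS : ∀ i x y, dist (S i x) (S i y) = r i * dist x y)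
    (F : Set (EuclideanSpace ℝ (Fin d)))
    (hF_ne : F.Nonempty) (hF_cpt : IsCompact F)
    (hF_self : F = ⋃ i, S i '' F)
    (D : ℝ) (hD : 0 < D) (hD_dim : ∑ i, r i ^ D = 1)
    (J : Set (EuclideanSpace ℝ (Fin d))) (hJ_cpt : IsCompact J)
    (hJ_reg : J = closure (interior J))
    (hJ_sub : ∀ i, S i '' J ⊆ J)
    (hJ_disj : ∀ i j, i ≠ j → Disjoint (S i '' interior J) (S j '' interior J))
    (hSOSC : (F ∩ interior J).Nonempty) :
    (∫⁻ y, ENNReal.ofReal |Real.log (Metric.infDist y Jᶜ)|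
        ∂((μH[D] F)⁻¹ • (μH[D] : Measure (EuclideanSpace ℝ (Fin d))).restrict F) < ⊤)
    ∧ (∀ᵐ y ∂((μH[D] F)⁻¹ •
          (μH[D] : Measure (EuclideanSpace ℝ (Fin d))).restrict F),
        0 < Metric.infDist y Jᶜ) := by
  by_cases h0 : μH[D] F = 0
  · have : (μH[D] : Measure (EuclideanSpace ℝ (Fin d))).restrict F = 0 :=
      Measure.restrict_eq_zero.2 h0
    simp [this]
  by_cases hT : μH[D] F = ⊤
  · simp [hT]
  have : Nonempty (Fin d) := ⟨⟨0, hd⟩⟩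
  have hJne : (Jᶜ).Nonempty := Set.nonempty_compl.2 hJ_cpt.ne_univ
  obtain ⟨hfm, hfi⟩ := St14.finite_int hd S r hr hS F hF_cpt hF_self D hD hD_dim J hJne hJ_sub
    hSOSC hT _ rfl
  have hae : ∀ᵐ y ∂((μH[D] : Measure (EuclideanSpace ℝ (Fin d))).restrict F),
      0 < Metric.infDist y Jᶜ := by
    filter_upwards [ae_lt_top hfm hfi.ne] with y hy
    refine lt_of_le_of_ne infDist_nonneg fun h => ?_
    simp [← h] at hy
  refine ⟨?_, Measure.ae_smul_measure hae _⟩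
  rw [lintegral_smul_measure, smul_eq_mul]
  refine ENNReal.mul_lt_top (ENNReal.inv_lt_top.2 (pos_iff_ne_zero.2 h0)) ?_
  obtain ⟨M, hM⟩ := (hF_cpt.image (continuous_infDist_pt Jᶜ)).bddAbove
  have hae2 : ∀ᵐ y ∂((μH[D] : Measure (EuclideanSpace ℝ (Fin d))).restrict F), y ∈ F :=
    ae_restrict_mem hF_cpt.measurableSet
  refine lt_of_le_of_lt (lintegral_mono_ae (g := fun y =>
    (if infDist y Jᶜ = 0 then ⊤ else ENNReal.ofReal (-Real.log (infDist y Jᶜ))) +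
      ENNReal.ofReal (Real.log M)) ?_) ?_
  · filter_upwards [hae, hae2] with y hy hyF
    have h1 : infDist y Jᶜ ≤ M := hM ⟨y, hyF, rfl⟩
    have h2 := Real.log_le_log hy h1
    simp only [hy.ne', if_false]
    rcases abs_cases (Real.log (infDist y Jᶜ)) with ⟨h, _⟩ | ⟨h, _⟩
    · rw [h]
      exact (ENNReal.ofReal_le_ofReal h2).trans le_add_self
    · rw [h]
      exact le_self_add
  · rw [lintegral_add_left hfm, setLIntegral_const]
    exact ENNReal.add_lt_top.2 ⟨hfi, ENNReal.mul_lt_top ENNReal.ofReal_lt_top (lt_top_iff_ne_top.2 hT)⟩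
end

section
/- Assume the SOSC holds with respect to J. Then H^D(F ∩ ∂J) = 0, i.e. μ_F(∂J) = 0, where ∂J denotes the topological boundary of J. -/
open MeasureTheory Metric Filter Set
open scoped ENNReal Topology NNReal

lemma aux_null {E : Type*} [MetricSpace E] [MeasurableSpace E] [BorelSpace E]
    {ι : Type} [Fintype ι] (g : ι → E → E) (ρ : ι → ℝ≥0) (hg : ∀ v, LipschitzWith (ρ v) (g v))
    (R : ℝ≥0) (hR : R < 1) (hρ : ∀ v, ρ v ≤ R) (D : ℝ) (hD : 0 < D)
    (hc : ∑ v, ρ v ^ D < 1) (A : Set E) (hA : Bornology.IsBounded A)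
    (hcov : A ⊆ ⋃ v, g v '' A) : μH[D] A = 0 := by
  have key : ∀ k : ℕ, ∃ (T : Type) (_ : Fintype T) (t : T → Set E), A ⊆ ⋃ i, t i ∧
      (∀ i, ediam (t i) ≤ (R : ℝ≥0∞) ^ k * ediam A) ∧
      ∑ i, ediam (t i) ^ D ≤ ((∑ v, ρ v ^ D : ℝ≥0) : ℝ≥0∞) ^ k * ediam A ^ D := by
    intro k
    induction k with
    | zero => exact ⟨Unit, inferInstance, fun _ => A, fun x hx => mem_iUnion.2 ⟨(), hx⟩, by simp, by simp⟩
    | succ k ih =>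
      obtain ⟨T, _, t, h1, h2, h3⟩ := ih
      refine ⟨ι × T, inferInstance, fun p => g p.1 '' t p.2, ?_, ?_, ?_⟩
      · intro x hx
        obtain ⟨v, y, hy, rfl⟩ := mem_iUnion.1 (hcov hx)
        obtain ⟨i, hi⟩ := mem_iUnion.1 (h1 hy)
        exact mem_iUnion.2 ⟨(v, i), y, hi, rfl⟩
      · rintro ⟨v, i⟩
        calc ediam (g v '' t i) ≤ ρ v * ediam (t i) := (hg v).ediam_image_le _
          _ ≤ R * ((R : ℝ≥0∞) ^ k * ediam A) := by
            gcongr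
            · exact_mod_cast hρ v
            · exact h2 i
          _ = _ := by ring
      · rw [Fintype.sum_prod_type]
        calc ∑ v, ∑ i, ediam (g v '' t i) ^ D
            ≤ ∑ v, ∑ i, (ρ v : ℝ≥0∞) ^ D * ediam (t i) ^ D := by
              gcongr with v _ i _
              rw [← ENNReal.mul_rpow_of_nonneg _ _ hD.le]
              gcongr
              exact (hg v).ediam_image_le _
          _ = ((∑ v, ρ v ^ D : ℝ≥0) : ℝ≥0∞) * ∑ i, ediam (t i) ^ D := by
              simp_rw [← Finset.mul_sum]
              rw [← Finset.sum_mul]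
              congr 1
              push_cast
              refine Finset.sum_congr rfl fun v _ => ?_
              rw [ENNReal.coe_rpow_of_nonneg _ hD.le]
          _ ≤ _ := by
              rw [pow_succ', mul_assoc]
              gcongr
  choose T hT t h1 h2 h3 using key
  have hAd : ediam A ≠ ⊤ := hA.ediam_ne_top
  have lim1 : Tendsto (fun k : ℕ => (R : ℝ≥0∞) ^ k * ediam A) atTop (𝓝 0) := by
    have := ENNReal.Tendsto.mul_const (b := ediam A)
      (ENNReal.tendsto_pow_atTop_nhds_zero_of_lt_one (r := (R : ℝ≥0∞)) (by exact_mod_cast hR))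
      (Or.inr hAd)
    simpa using this
  have lim2 : Tendsto (fun k : ℕ => ((∑ v, ρ v ^ D : ℝ≥0) : ℝ≥0∞) ^ k * ediam A ^ D)
      atTop (𝓝 0) := by
    have := ENNReal.Tendsto.mul_const (b := ediam A ^ D)
      (ENNReal.tendsto_pow_atTop_nhds_zero_of_lt_one
        (r := ((∑ v, ρ v ^ D : ℝ≥0) : ℝ≥0∞)) (by exact_mod_cast hc))
      (Or.inr (ENNReal.rpow_ne_top_of_nonneg hD.le hAd))
    simpa using this
  have := Measure.hausdorffMeasure_le_liminf_sum D A
    (l := atTop) (fun k : ℕ => (R : ℝ≥0∞) ^ k * ediam A) lim1 t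
    (Eventually.of_forall fun k i => h2 k i) (Eventually.of_forall h1)
  have h0 := tendsto_of_tendsto_of_tendsto_of_le_of_le tendsto_const_nhds lim2
    (fun k => zero_le) h3
  rw [h0.liminf_eq] at this
  exact le_antisymm this zero_le

lemma aux_open {d : ℕ} (S : EuclideanSpace ℝ (Fin d) → EuclideanSpace ℝ (Fin d)) (r : ℝ)
    (hr : 0 < r) (hS : ∀ x y, dist (S x) (S y) = r * dist x y) : IsOpenMap S := by
  have iso : Isometry (fun x => r⁻¹ • S x) := by
    refine Isometry.of_dist_eq fun x y => ?_
    rw [dist_smul₀, hS, Real.norm_of_nonneg (by positivity)]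
    field_simp
  let e := (iso.affineIsometryOfStrictConvexSpace).toAffineIsometryEquiv rfl
  have h : S = fun x => r • e x := by
    funext x
    have : e x = r⁻¹ • S x := rfl
    rw [this, smul_inv_smul₀ hr.ne']
  rw [h]
  exact (isOpenMap_smul₀ hr.ne').comp e.toHomeomorph.isOpenMap



/-- Under the strong open set condition with respect to `J`, the
boundary of `J` is a null set for the `D`-dimensional Hausdorff measure on `F`:
`H^D(F ∩ ∂J) = 0` (equivalently `μ_F(∂J) = 0`). -/
theorem statement15 (d N : ℕ) (hd : 1 ≤ d) (hN : 2 ≤ N)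
    (S : Fin N → EuclideanSpace ℝ (Fin d) → EuclideanSpace ℝ (Fin d))
    (r : Fin N → ℝ) (hr : ∀ i, r i ∈ Set.Ioo (0 : ℝ) 1)
    (hS : ∀ i x y, dist (S i x) (S i y) = r i * dist x y)
    (F : Set (EuclideanSpace ℝ (Fin d)))
    (hF_ne : F.Nonempty) (hF_cpt : IsCompact F)
    (hF_self : F = ⋃ i, S i '' F)
    (D : ℝ) (hD : 0 < D) (hD_dim : ∑ i, r i ^ D = 1)
    (J : Set (EuclideanSpace ℝ (Fin d))) (hJ_cpt : IsCompact J)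
    (hJ_reg : J = closure (interior J))
    (hJ_sub : ∀ i, S i '' J ⊆ J)
    (hJ_disj : ∀ i j, i ≠ j → Disjoint (S i '' interior J) (S j '' interior J))
    (hSOSC : (F ∩ interior J).Nonempty) :
    μH[D] (F ∩ frontier J) = 0 := by
  set U := interior J with hU
  have hSU : ∀ i, S i '' U ⊆ U := fun i =>
    interior_maximal ((image_mono interior_subset).trans (hJ_sub i))
      (aux_open (S i) (r i) (hr i).1 (hS i) _ isOpen_interior)
  have : Nonempty (Fin N) := ⟨⟨0, by omega⟩⟩
  let q : Fin N → ℝ≥0 := fun i => ⟨r i, (hr i).1.le⟩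
  obtain ⟨i0, hi0⟩ := Finite.exists_max q
  have hR : q i0 < 1 := (hr i0).2
  have hqS : ∀ i, LipschitzWith (q i) (S i) := fun i =>
    LipschitzWith.of_dist_le_mul fun x y => (hS i x y).le
  have hqD : ∑ i, q i ^ D = 1 := by
    apply NNReal.coe_injective
    push_cast
    exact hD_dim
  have key : ∀ n : ℕ, ∃ (T : Type) (_ : Fintype T) (g : T → EuclideanSpace ℝ (Fin d) →
      EuclideanSpace ℝ (Fin d)) (ρ : T → ℝ≥0), (∀ v, LipschitzWith (ρ v) (g v)) ∧
      (∀ v, 0 < ρ v) ∧ (∀ v, ρ v ≤ q i0 ^ n) ∧ ∑ v, ρ v ^ D = 1 ∧ (∀ v, g v '' U ⊆ U) ∧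
      F ⊆ ⋃ v, g v '' F := by
    intro n
    induction n with
    | zero =>
      exact ⟨Unit, inferInstance, fun _ => id, fun _ => 1, fun _ => LipschitzWith.id,
        by simp, by simp, by simp, by simp, fun x hx => mem_iUnion.2 ⟨(), x, hx, rfl⟩⟩
    | succ n ih =>
      obtain ⟨T, _, g, ρ, h1, h2, h3, h4, h5, h6⟩ := ih
      refine ⟨Fin N × T, inferInstance, fun p => S p.1 ∘ g p.2, fun p => q p.1 * ρ p.2,
        fun p => (hqS p.1).comp (h1 p.2), fun p => mul_pos (hr p.1).1 (h2 p.2), ?_, ?_, ?_, ?_⟩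
      · intro p
        rw [pow_succ']
        exact mul_le_mul' (hi0 _) (h3 _)
      · rw [Fintype.sum_prod_type]
        simp_rw [NNReal.mul_rpow, ← Finset.mul_sum, h4, mul_one, hqD]
      · intro p
        rw [image_comp]
        exact (image_mono (h5 _)).trans (hSU _)
      · intro x hx
        rw [hF_self] at hx
        obtain ⟨i, y, hy, rfl⟩ := mem_iUnion.1 hx
        obtain ⟨v, z, hz, rfl⟩ := mem_iUnion.1 (h6 hy)
        exact mem_iUnion.2 ⟨(i, v), z, hz, rfl⟩
  obtain ⟨x, hxF, hxU⟩ := hSOSC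
  obtain ⟨ε, hε, hball⟩ := Metric.isOpen_iff.1 isOpen_interior x hxU
  have lim : Tendsto (fun n : ℕ => (q i0 : ℝ) ^ n * diam F) atTop (𝓝 0) := by
    simpa using (tendsto_pow_atTop_nhds_zero_of_lt_one (q i0).2 hR).mul_const (diam F)
  obtain ⟨n, hn, hn1⟩ := ((lim.eventually_lt_const hε).and (eventually_ge_atTop 1)).exists
  obtain ⟨T, _, g, ρ, h1, h2, h3, h4, h5, h6⟩ := key n
  obtain ⟨w, y, hy, hwy⟩ := mem_iUnion.1 (h6 hxF)
  have hw : g w '' F ⊆ U := by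
    rintro _ ⟨z, hz, rfl⟩
    apply hball
    rw [Metric.mem_ball, ← hwy]
    calc dist (g w z) (g w y) ≤ ρ w * dist z y := (h1 w).dist_le_mul _ _
      _ ≤ (q i0 : ℝ) ^ n * diam F := by
        gcongr
        · exact_mod_cast h3 w
        · exact dist_le_diam_of_mem hF_cpt.isBounded hz hy
      _ < ε := hn
  classical
  have hnull : μH[D] (F \ U) = 0 := by
    refine aux_null (ι := {v : T // v ≠ w}) (fun v => g v) (fun v => ρ v) (fun v => h1 v)
      (q i0) hR (fun v => (h3 v).trans (pow_le_of_le_one zero_le hR.le (by omega))) D hD ?_ _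
      (hF_cpt.isBounded.subset sdiff_subset) ?_
    · have h := Finset.sum_subtype (F := inferInstance) (Finset.univ.erase w) (p := fun v => v ≠ w) (by simp)
        (fun v => ρ v ^ D)
      rw [← h, ← h4]
      exact Finset.sum_erase_lt_of_pos (Finset.mem_univ w) (NNReal.rpow_pos (h2 w))
    · rintro a ⟨haF, haU⟩
      obtain ⟨v, z, hz, rfl⟩ := mem_iUnion.1 (h6 haF)
      have hvw : v ≠ w := by
        rintro rfl
        exact haU (hw ⟨z, hz, rfl⟩)
      exact mem_iUnion.2 ⟨⟨v, hvw⟩, z, ⟨hz, fun hzU => haU (h5 v ⟨z, hzU, rfl⟩)⟩, rfl⟩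
  refine measure_mono_null ?_ hnull
  rintro a ⟨ha, hb⟩
  exact ⟨ha, hb.2⟩
end

section
/- Let F ⊆ ℝ^d be compact, D > 0, and c_F ∈ (0,1] such that H^D(F ∩ B(y,r)) ≥ c_F r^D for all y ∈ F and all 0 < r ≤ diam F (lower Ahlfors regularity). Then for every ε > 0 with c_F^{−1/D} ε ≤ diam F and every x ∈ ℝ^d with d(x,F) ≤ ε, one has H^D(F ∩ B(x, 2 c_F^{−1/D} ε)) ≥ ε^D. Consequently, ρ_F(x,ε) := inf{ρ > 0 : H^D(F ∩ B(x,ρ)) ≥ ε^D} satisfies ρ_F(x,ε) ≤ 2 c_F^{−1/D} ε for every x in the closed ε-parallel set F(ε) := {z : d(z,F) ≤ ε}. -/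
open MeasureTheory Metric Filter Set
open scoped ENNReal Topology

/-- Let `F ⊆ ℝ^d` be compact, `D > 0`, `c_F ∈ (0,1]` with the lower
Ahlfors regularity `H^D(F ∩ B(y,r)) ≥ c_F r^D` for `y ∈ F`, `0 < r ≤ diam F`.  Then
for every `ε > 0` with `c_F^{-1/D} ε ≤ diam F` and every `x` with `d(x,F) ≤ ε` one has
`H^D(F ∩ B(x, 2 c_F^{-1/D} ε)) ≥ ε^D`; consequently the localization radius
`ρ_F(x,ε) := inf{ρ > 0 : H^D(F ∩ B(x,ρ)) ≥ ε^D}` satisfies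
`ρ_F(x,ε) ≤ 2 c_F^{-1/D} ε` for every `x` in the closed parallel set `F(ε)`. -/
theorem statement16 (d : ℕ) (F : Set (EuclideanSpace ℝ (Fin d))) (hF_cpt : IsCompact F)
    (D : ℝ) (hD : 0 < D) (c_F : ℝ) (hc : c_F ∈ Set.Ioc (0 : ℝ) 1)
    (hreg : ∀ y ∈ F, ∀ ρ : ℝ, 0 < ρ → ρ ≤ Metric.diam F →
      ENNReal.ofReal (c_F * ρ ^ D) ≤ μH[D] (F ∩ Metric.closedBall y ρ))
    (ε : ℝ) (hε : 0 < ε) (hε_diam : c_F ^ (-(1 / D)) * ε ≤ Metric.diam F) :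
    (∀ x : EuclideanSpace ℝ (Fin d), Metric.infDist x F ≤ ε →
      ENNReal.ofReal (ε ^ D)
        ≤ μH[D] (F ∩ Metric.closedBall x (2 * c_F ^ (-(1 / D)) * ε)))
    ∧ (∀ x ∈ Metric.cthickening ε F,
        sInf {ρ : ℝ | 0 < ρ ∧
            ENNReal.ofReal (ε ^ D) ≤ μH[D] (F ∩ Metric.closedBall x ρ)}
          ≤ 2 * c_F ^ (-(1 / D)) * ε) := by
  obtain ⟨hc0, hc1⟩ := hc
  have hr1 : 1 ≤ c_F ^ (-(1 / D)) :=
    Real.one_le_rpow_of_pos_of_le_one_of_nonpos hc0 hc1 (by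
      have : 0 < 1 / D := by positivity
      linarith)
  have hrpos : 0 < c_F ^ (-(1 / D)) * ε := by positivity
  have hεr : ε ≤ c_F ^ (-(1 / D)) * ε := by nlinarith
  have hne : F.Nonempty := by
    rcases F.eq_empty_or_nonempty with h | h
    · subst h
      rw [Metric.diam_empty] at hε_diam
      linarith
    · exact h
  have key : c_F * (c_F ^ (-(1 / D)) * ε) ^ D = ε ^ D := by
    rw [Real.mul_rpow (by positivity) hε.le, ← Real.rpow_mul hc0.le]
    have : -(1 / D) * D = -1 := by field_simp
    rw [this, Real.rpow_neg_one]
    field_simp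
  have main : ∀ x : EuclideanSpace ℝ (Fin d), Metric.infDist x F ≤ ε →
      ENNReal.ofReal (ε ^ D)
        ≤ μH[D] (F ∩ Metric.closedBall x (2 * c_F ^ (-(1 / D)) * ε)) := by
    intro x hx
    obtain ⟨y, hy, hxy⟩ := hF_cpt.exists_infDist_eq_dist hne x
    have h := hreg y hy _ hrpos hε_diam
    rw [key] at h
    refine h.trans (measure_mono (inter_subset_inter_right _ ?_))
    apply Metric.closedBall_subset_closedBall'
    rw [dist_comm, ← hxy]
    linarith
  refine ⟨main, fun x hx => ?_⟩
  have hx' : Metric.infDist x F ≤ ε := by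
    rw [Metric.mem_cthickening_iff] at hx
    exact ENNReal.toReal_le_of_le_ofReal hε.le hx
  refine csInf_le ⟨0, fun ρ hρ => hρ.1.le⟩ ⟨by positivity, main x hx'⟩
end
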